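/- arXiv:math/0701066 — 2 statements merged into one kernel-verified Lean document; each statement's English description precedes it below -/
import Mathlib

section
/- Forrester's conjecture holds for $n_1 = 2$: for nonnegative integers $a, b, k, n_0$ and $n = n_0 + 2$, the constant term $\mathrm{CT}_x \prod_{i,j=n_0+1,\,i\ne j}^{n}(1-x_i/x_j)\, H(x_0,\ldots,x_n;a,b,k)$ equals $M_{n_0}(a,b,k)\prod_{j=0}^{1}\frac{(j+1)((k+1)j+a+b+kn_0)!\,(kj+k+j+kn_0)!}{k!\,((k+1)j+a+kn_0)!\,((k+1)j+b+kn_0)!}$. -/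
open MvPolynomial Finset

/-- The Forrester constant term
`CT_x ∏_{n₀+1 ≤ i ≠ j ≤ n₀+n₁}(1-x_i/x_j) · H(x_0,…,x_n;a,b,k)`, where
`H(x_0,…,x_n;a,b,k) = ∏_{l=1}^n (1-x_l/x_0)^a (1-x_0/x_l)^b ∏_{1≤i≠j≤n}(1-x_i/x_j)^k`
and `n = n₀ + n₁`.  Clearing denominators, it is the coefficient of
`x_0^(n·a) ∏_{l≤n₀} x_l^(b+(n-1)k) ∏_{l>n₀} x_l^(b+(n-1)k+n₁-1)` in
`∏_{n₀<i≠j≤n}(x_j-x_i) · ∏_{l=1}^n (x_0-x_l)^a (x_l-x_0)^b · ∏_{1≤i≠j≤n}(x_j-x_i)^k`. -/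
noncomputable def forresterCT (n₀ n₁ a b k : ℕ) : ℚ :=
  MvPolynomial.coeff
    (Finsupp.equivFunOnFinite.symm
      (Fin.cons ((n₀ + n₁) * a)
        (fun l : Fin (n₀ + n₁) =>
          b + (n₀ + n₁ - 1) * k + (if n₀ ≤ (l : ℕ) then n₁ - 1 else 0))))
    ((∏ j ∈ Finset.univ.filter (fun l : Fin (n₀ + n₁) => n₀ ≤ (l : ℕ)),
        ∏ i ∈ (Finset.univ.filter (fun l : Fin (n₀ + n₁) => n₀ ≤ (l : ℕ))).erase j,
          (X j.succ - X i.succ : MvPolynomial (Fin (n₀ + n₁ + 1)) ℚ)) *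
      (∏ l : Fin (n₀ + n₁),
        (X (0 : Fin (n₀ + n₁ + 1)) - X l.succ : MvPolynomial (Fin (n₀ + n₁ + 1)) ℚ) ^ a *
          (X l.succ - X (0 : Fin (n₀ + n₁ + 1))) ^ b) *
      ∏ j : Fin (n₀ + n₁), ∏ i ∈ Finset.univ.erase j,
        (X j.succ - X i.succ : MvPolynomial (Fin (n₀ + n₁ + 1)) ℚ) ^ k)

/-- The right-hand side of Forrester's conjecture:
`M_{n₀}(a,b,k) ∏_{j=0}^{n₁-1} (j+1)((k+1)j+a+b+kn₀)!(kj+k+j+kn₀)! /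
  (k!((k+1)j+a+kn₀)!((k+1)j+b+kn₀)!)`. -/
noncomputable def forresterRHS (n₀ n₁ a b k : ℕ) : ℚ :=
  (∏ l ∈ Finset.range n₀,
      (((a + b + k * l).factorial * (k * (l + 1)).factorial : ℚ) /
        ((a + k * l).factorial * (b + k * l).factorial * k.factorial))) *
    ∏ j ∈ Finset.range n₁,
      (((j + 1) * ((k + 1) * j + a + b + k * n₀).factorial *
          (k * j + k + j + k * n₀).factorial : ℚ) /
        (k.factorial * ((k + 1) * j + a + k * n₀).factorial *
          ((k + 1) * j + b + k * n₀).factorial))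

/-!
Aomoto's method. With respect to the Morris weight
`∏_l (x_0 - x_l)^m ∏_{i ≠ j} (x_j - x_i)^k`, consider the moments of `x_0^d ∏_{l ∈ A} x_l`.
Integrating by parts in `x_i` and symmetrising over the exchanges of `x_i` with the other variables
turns the interaction terms into moments of the same kind. For `i ∉ A` the resulting recurrence
trades `x_0` for `x_i`, and running it from `A = ∅` to `A = {1, …, n}` shifts `(a + 1, b)` to
`(a, b + 1)`; together with the case `b = 0`, which loses one variable, this gives Morris's constant
term identity. For `n₁ = 2` the extra factor expands into the moment of `x_1 ⋯ x_n` and those of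
`x_1 ⋯ x_n x_p / x_q`, and the recurrence for `i ∈ A` expresses the latter through the former.
-/

namespace Forrester

section Products

variable {ι M : Type*} [DecidableEq ι] [CommMonoid M]

lemma prod_prod_erase_eq [Fintype ι] (f : ι → ι → M) (i : ι) :
    ∏ j, ∏ l ∈ univ.erase j, f j l =
      (∏ j ∈ univ.erase i, f i j * f j i) *
        ∏ j ∈ univ.erase i, ∏ l ∈ (univ.erase j).erase i, f j l := by
  have hrow : ∀ j ∈ univ.erase i,
      ∏ l ∈ univ.erase j, f j l = f j i * ∏ l ∈ (univ.erase j).erase i, f j l := fun j hj ↦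
    (mul_prod_erase _ _ (mem_erase.2 ⟨(ne_of_mem_erase hj).symm, mem_univ i⟩)).symm
  rw [← mul_prod_erase _ _ (mem_univ i), prod_congr rfl hrow, prod_mul_distrib, prod_mul_distrib,
    mul_assoc]

lemma prod_pair_prod_erase {i j : ι} (hij : i ≠ j) (f : ι → ι → M) :
    ∏ l ∈ {i, j}, ∏ r ∈ ({i, j} : Finset ι).erase l, f l r = f i j * f j i := by
  have hj : ({i, j} : Finset ι).erase j = {i} := by
    rw [pair_comm, erase_insert (notMem_singleton.2 hij.symm)]
  rw [prod_pair hij, erase_insert (notMem_singleton.2 hij), hj, prod_singleton, prod_singleton]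

lemma prod_comp_swap_of_mem_iff {s : Finset ι} {i j : ι} (h : i ∈ s ↔ j ∈ s) (f : ι → M) :
    ∏ l ∈ s, f (Equiv.swap i j l) = ∏ l ∈ s, f l := by
  refine prod_equiv (Equiv.swap i j) (fun l ↦ ?_) fun _ _ ↦ rfl
  rw [Equiv.swap_apply_def]
  split_ifs <;> simp_all

lemma sum_erase_ite_mem {R : Type*} [CommRing R] [Fintype ι] (A : Finset ι) (i : ι) (a : R)
    (b : ι → R) :
    ∑ j ∈ univ.erase i, (if j ∈ A then a else b j) =
      #A * a + ∑ j ∈ Aᶜ, b j - if i ∈ A then a else b i := by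
  have hcompl : univ.filter (· ∉ A) = Aᶜ := by ext; simp
  rw [sum_erase_eq_sub (mem_univ i), sum_ite, sum_const, nsmul_eq_mul, filter_univ_mem, hcompl]

lemma natCast_card_compl {R : Type*} [AddGroupWithOne R] [Fintype ι] (A : Finset ι) :
    (#Aᶜ : R) = Fintype.card ι - #A := by
  rw [card_compl, Nat.cast_sub (card_le_univ A)]

end Products

section Derivations

variable {R A ι : Type*} [CommSemiring R] [CommSemiring A] [Algebra R A]

lemma derivation_prod [DecidableEq ι] (d : Derivation R A A) (f : ι → A) (s : Finset ι) :
    d (∏ i ∈ s, f i) = ∑ i ∈ s, (∏ j ∈ s.erase i, f j) * d (f i) := by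
  induction s using Finset.induction_on with
  | empty => simp
  | insert a s ha ih =>
    have herase : ∀ i ∈ s,
        (∏ j ∈ (insert a s).erase i, f j) * d (f i) =
          f a * ((∏ j ∈ s.erase i, f j) * d (f i)) := fun i hi ↦ by
      rw [erase_insert_of_ne (by rintro rfl; exact ha hi),
        prod_insert fun h ↦ ha (mem_of_mem_erase h), mul_assoc]
    rw [prod_insert ha, sum_insert ha, erase_insert ha, sum_congr rfl herase, ← mul_sum, ← ih,
      Derivation.leibniz, smul_eq_mul, smul_eq_mul, add_comm]

lemma derivation_prod_eq_zero (d : Derivation R A A) {f : ι → A} {s : Finset ι}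
    (h : ∀ i ∈ s, d (f i) = 0) : d (∏ i ∈ s, f i) = 0 := by
  classical
  rw [derivation_prod]
  exact sum_eq_zero fun i hi ↦ by rw [h i hi, mul_zero]

lemma mul_derivation_pow (d : Derivation R A A) (u : A) (k : ℕ) :
    u * d (u ^ k) = k * d u * u ^ k := by
  cases k with
  | zero => simp
  | succ k =>
    rw [Derivation.leibniz_pow, Nat.add_sub_cancel, nsmul_eq_mul, smul_eq_mul]
    ring

end Derivations

section Coefficients

variable {R σ : Type*} [CommSemiring R]

lemma coeff_X_mul_pderiv (u : σ →₀ ℕ) (i : σ) (p : MvPolynomial σ R) :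
    coeff u (X i * pderiv i p) = u i * coeff u p := by
  classical
  induction p using MvPolynomial.induction_on' with
  | monomial v a =>
    rw [X_mul_pderiv_monomial, coeff_smul, coeff_monomial, nsmul_eq_mul]
    split_ifs with h
    · rw [h]
    · simp
  | add p q hp hq => simp only [map_add, mul_add, coeff_add, hp, hq]

lemma coeff_rename_perm {e : Equiv.Perm σ} {u : σ →₀ ℕ} (hu : ∀ i, u (e i) = u i)
    (p : MvPolynomial σ R) : coeff u (rename e p) = coeff u p := by
  have hmap : u.mapDomain e = u := by
    ext i
    rw [← e.apply_symm_apply i, Finsupp.mapDomain_apply e.injective, hu]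
  conv_lhs => rw [← hmap]
  exact coeff_rename_mapDomain _ e.injective _ _

end Coefficients

section PairProd

variable {R ι κ : Type*} [CommRing R] [Fintype ι] [DecidableEq ι] [Fintype κ] [DecidableEq κ]

/-- The Dyson product `∏_{i ≠ j} (x_j - x_i)^k` over ordered pairs, i.e. `∏_{i ≠ j} (1 - x_i/x_j)^k`
with denominators cleared. -/
noncomputable def dysonProd (R ι : Type*) [CommRing R] [Fintype ι] [DecidableEq ι] (k : ℕ) :
    MvPolynomial ι R :=
  ∏ j, ∏ i ∈ univ.erase j, (X j - X i) ^ k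

lemma rename_dysonProd (e : ι ≃ κ) (k : ℕ) :
    rename e (dysonProd R ι k) = dysonProd R κ k := by
  simp only [dysonProd, map_prod, map_pow, map_sub, rename_X]
  refine Fintype.prod_equiv e _ _ fun j ↦ prod_equiv e (fun i ↦ ?_) fun _ _ ↦ rfl
  simp

/-- The terms `h j` are `2k (dysonProd k) / (x_i - x_j)`, which are polynomials. -/
lemma exists_pderiv_dysonProd_eq_sum (k : ℕ) (i : ι) :
    ∃ h : ι → MvPolynomial ι R,
      (∀ j ≠ i, (X i - X j) * h j = 2 * (k : MvPolynomial ι R) * dysonProd R ι k) ∧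
        pderiv i (dysonProd R ι k) = ∑ j ∈ univ.erase i, h j := by
  set f : ι → MvPolynomial ι R := fun j ↦ (X i - X j) ^ k * (X j - X i) ^ k
  set g : MvPolynomial ι R :=
    ∏ j ∈ univ.erase i, ∏ l ∈ (univ.erase j).erase i, (X j - X l) ^ k
  have hfg : dysonProd R ι k = (∏ j ∈ univ.erase i, f j) * g := prod_prod_erase_eq _ i
  have hg : pderiv i g = 0 := by
    refine derivation_prod_eq_zero _ fun j hj ↦ derivation_prod_eq_zero _ fun l hl ↦ ?_
    rw [Derivation.leibniz_pow, map_sub, pderiv_X_of_ne (ne_of_mem_erase hj),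
      pderiv_X_of_ne (ne_of_mem_erase hl), sub_zero, smul_zero, smul_zero]
  have hf : ∀ j ≠ i, (X i - X j) * pderiv i (f j) = 2 * (k : MvPolynomial ι R) * f j := by
    intro j hj
    have h₁ := mul_derivation_pow (pderiv i) (X i - X j : MvPolynomial ι R) k
    have h₂ := mul_derivation_pow (pderiv i) (X j - X i : MvPolynomial ι R) k
    rw [map_sub, pderiv_X_self, pderiv_X_of_ne hj] at h₁ h₂
    rw [Derivation.leibniz, smul_eq_mul, smul_eq_mul]
    linear_combination (X j - X i) ^ k * h₁ - (X i - X j) ^ k * h₂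
  refine ⟨fun j ↦ (∏ l ∈ (univ.erase i).erase j, f l) * pderiv i (f j) * g, fun j hj ↦ ?_, ?_⟩
  · rw [hfg, ← mul_prod_erase _ f (mem_erase.2 ⟨hj, mem_univ j⟩)]
    linear_combination (∏ l ∈ (univ.erase i).erase j, f l) * g * hf j hj
  · rw [hfg, Derivation.leibniz, hg, smul_zero, zero_add, derivation_prod, smul_eq_mul, mul_comm,
      sum_mul]

lemma dysonProd_succ (n k : ℕ) :
    dysonProd R (Fin (n + 1)) k =
      (∏ l : Fin n, (X 0 - X l.succ) ^ k * (X l.succ - X 0) ^ k) *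
        rename Fin.succ (dysonProd R (Fin n) k) := by
  have herase : univ.erase (0 : Fin (n + 1)) = univ.map (Fin.succEmb n) := by
    rw [Fin.univ_succ, cons_eq_insert, erase_insert (by simp)]; rfl
  have herase_succ (l : Fin n) :
      (univ.erase l.succ).erase 0 = (univ.erase l).map (Fin.succEmb n) := by
    rw [erase_right_comm, herase, map_erase]; rfl
  rw [dysonProd, prod_prod_erase_eq _ 0, herase, prod_map, prod_map]
  simp only [Fin.coe_succEmb, herase_succ, prod_map, dysonProd, map_prod, map_pow, map_sub,
    rename_X]

end PairProd

section Moment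

variable {R : Type*} [CommRing R] {n : ℕ}

/-- The exponent vector of `x_0^c x_1^{g_0} ⋯ x_n^{g_{n-1}}`. -/
noncomputable def exponent (c : ℕ) (g : Fin n → ℕ) : Fin (n + 1) →₀ ℕ :=
  Finsupp.equivFunOnFinite.symm (Fin.cons c g)

@[simp] lemma exponent_zero (c : ℕ) (g : Fin n → ℕ) : exponent c g 0 = c := rfl

@[simp] lemma exponent_succ (c : ℕ) (g : Fin n → ℕ) (i : Fin n) : exponent c g i.succ = g i := rfl

lemma coeff_exponent_add {R : Type*} [CommSemiring R] (c d : ℕ) (g g' : Fin n → ℕ)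
    (p : MvPolynomial (Fin (n + 1)) R) :
    coeff (exponent (c + d) fun l ↦ g l + g' l) (X 0 ^ d * (∏ l, X l.succ ^ g' l) * p) =
      coeff (exponent c g) p := by
  have hmonomial : (X 0 ^ d * ∏ l : Fin n, X l.succ ^ g' l : MvPolynomial (Fin (n + 1)) R) =
      monomial (exponent d g') 1 := by
    rw [monomial_eq, Finsupp.prod_fintype _ _ (by simp), Fin.prod_univ_succ]
    simp
  have hadd : (exponent (c + d) fun l ↦ g l + g' l) = exponent d g' + exponent c g := by
    ext i
    cases i using Fin.cases <;> simp [add_comm]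
  rw [hmonomial, hadd, coeff_monomial_mul, one_mul]

/-- The permutation of the variables `x_1, …, x_n` that fixes `x_0`. -/
noncomputable def permVars (e : Equiv.Perm (Fin n)) :
    MvPolynomial (Fin (n + 1)) R →ₐ[R] MvPolynomial (Fin (n + 1)) R :=
  rename (Equiv.Perm.decomposeFin.symm (0, e))

@[simp] lemma permVars_X_zero (e : Equiv.Perm (Fin n)) : permVars (R := R) e (X 0) = X 0 := by
  simp [permVars]

@[simp] lemma permVars_X_succ (e : Equiv.Perm (Fin n)) (i : Fin n) :
    permVars (R := R) e (X i.succ) = X (e i).succ := by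
  simp [permVars]

lemma permVars_rename_succ (e : Equiv.Perm (Fin n)) (p : MvPolynomial (Fin n) R) :
    permVars e (rename Fin.succ p) = rename Fin.succ (rename e p) := by
  rw [permVars, rename_rename, rename_rename]
  exact congrArg (rename · p) (funext fun i ↦ by simp)

lemma coeff_permVars (e : Equiv.Perm (Fin n)) (c s : ℕ) (p : MvPolynomial (Fin (n + 1)) R) :
    coeff (exponent c fun _ ↦ s) (permVars e p) = coeff (exponent c fun _ ↦ s) p := by
  refine coeff_rename_perm (fun i ↦ ?_) p
  cases i using Fin.cases <;> simp

/-- The product `∏_l (x_0 - x_l)^m`. -/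
noncomputable def rootProd (R : Type*) [CommRing R] (n m : ℕ) : MvPolynomial (Fin (n + 1)) R :=
  ∏ l : Fin n, (X 0 - X l.succ) ^ m

lemma permVars_rootProd (e : Equiv.Perm (Fin n)) (m : ℕ) :
    permVars e (rootProd R n m) = rootProd R n m := by
  simp only [rootProd, map_prod, map_pow, map_sub, permVars_X_zero, permVars_X_succ]
  exact Equiv.prod_comp e fun l ↦ ((X 0 - X l.succ) ^ m : MvPolynomial (Fin (n + 1)) R)

lemma mul_pderiv_rootProd (m : ℕ) (i : Fin n) :
    (X 0 - X i.succ) * pderiv i.succ (rootProd R n m) =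
      -(m : MvPolynomial (Fin (n + 1)) R) * rootProd R n m := by
  have hrest : pderiv i.succ (∏ l ∈ univ.erase i, (X 0 - X l.succ : MvPolynomial _ R) ^ m) = 0 :=
    derivation_prod_eq_zero _ fun l hl ↦ by
      rw [Derivation.leibniz_pow, map_sub, pderiv_X_of_ne (Fin.succ_ne_zero i).symm,
        pderiv_X_of_ne ((Fin.succ_injective n).ne (ne_of_mem_erase hl)), sub_zero, smul_zero,
        smul_zero]
  have hpow := mul_derivation_pow (pderiv i.succ) (X 0 - X i.succ : MvPolynomial _ R) m
  rw [map_sub, pderiv_X_self, pderiv_X_of_ne (Fin.succ_ne_zero i).symm] at hpow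
  rw [rootProd, ← mul_prod_erase _ _ (mem_univ i), Derivation.leibniz, hrest, smul_zero, zero_add,
    smul_eq_mul]
  linear_combination (∏ l ∈ univ.erase i, (X 0 - X l.succ) ^ m) * hpow

/-- The linear functional `p ↦ CT (p · x_0^{-c} ∏_l x_l^{-s} · w)`, where
`w = ∏_l (x_0 - x_l)^m ∏_{i ≠ j} (x_j - x_i)^k` is the weight of the Morris constant term. -/
noncomputable def moment (R : Type*) [CommRing R] {n : ℕ} (m k c s : ℕ) :
    MvPolynomial (Fin (n + 1)) R →ₗ[R] R :=
  lcoeff R (exponent c fun _ ↦ s) ∘ₗ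
    LinearMap.mulRight R (rootProd R n m * rename Fin.succ (dysonProd R (Fin n) k))

variable {m k c s : ℕ}

lemma moment_apply (p : MvPolynomial (Fin (n + 1)) R) :
    moment R m k c s p = coeff (exponent c fun _ ↦ s)
      (p * (rootProd R n m * rename Fin.succ (dysonProd R (Fin n) k))) := rfl

lemma moment_permVars (e : Equiv.Perm (Fin n)) (p : MvPolynomial (Fin (n + 1)) R) :
    moment R m k c s (permVars e p) = moment R m k c s p := by
  rw [moment_apply, moment_apply, ← coeff_permVars e c s (p * _), map_mul, map_mul,
    permVars_rootProd, permVars_rename_succ, rename_dysonProd]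

lemma moment_X_zero_pow_mul (d : ℕ) (p : MvPolynomial (Fin (n + 1)) R) :
    moment R m k (c + d) s (X 0 ^ d * p) = moment R m k c s p := by
  have h := coeff_exponent_add c d (fun _ : Fin n ↦ s) 0
    (p * (rootProd R n m * rename Fin.succ (dysonProd R (Fin n) k)))
  simpa [moment_apply, mul_assoc] using h

lemma moment_prod_X_succ_mul (p : MvPolynomial (Fin (n + 1)) R) :
    moment R m k c (s + 1) ((∏ l : Fin n, X l.succ) * p) = moment R m k c s p := by
  have h := coeff_exponent_add c 0 (fun _ : Fin n ↦ s) 1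
    (p * (rootProd R n m * rename Fin.succ (dysonProd R (Fin n) k)))
  simpa [moment_apply, mul_assoc] using h

end Moment

section IntegrationByParts

variable {R : Type*} [CommRing R] {n m k c s : ℕ}

/-- The statement that `r` is the moment of the divided difference of `(x_0 - x_i) x_i P` with
respect to the exchange of `x_i` and `x_j`. These are the interaction terms of the integration by
parts in `x_i`. -/
def IsExchangeMoment (m k c s : ℕ) (i j : Fin n) (P : MvPolynomial (Fin (n + 1)) R) (r : R) :
    Prop :=
  ∃ q, (X 0 - X i.succ) * X i.succ * P -
      permVars (Equiv.swap i j) ((X 0 - X i.succ) * X i.succ * P) = (X i.succ - X j.succ) * q ∧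
    moment R m k c s q = r

variable [IsDomain R] [CharZero R]

/-- The factor `h` is antisymmetric under exchange of `x_i` and `x_j`, so only the antisymmetric
part of `f` contributes. -/
lemma coeff_mul_rootProd_mul_eq_moment {i j : Fin n} (hij : i ≠ j)
    {f h q : MvPolynomial (Fin (n + 1)) R}
    (hh : (X i.succ - X j.succ) * h =
      2 * (k : MvPolynomial (Fin (n + 1)) R) * rename Fin.succ (dysonProd R (Fin n) k))
    (hq : f - permVars (Equiv.swap i j) f = (X i.succ - X j.succ) * q) :
    coeff (exponent c fun _ ↦ s) (f * (rootProd R n m * h)) = k * moment R m k c s q := by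
  have hantisymm : permVars (Equiv.swap i j) h = -h := by
    have hswap := congrArg (permVars (Equiv.swap i j)) hh
    simp only [map_mul, map_sub, permVars_X_succ, Equiv.swap_apply_left, Equiv.swap_apply_right,
      map_ofNat, map_natCast, permVars_rename_succ, rename_dysonProd] at hswap
    have hne : (X i.succ - X j.succ : MvPolynomial (Fin (n + 1)) R) ≠ 0 :=
      sub_ne_zero.2 <| X_injective.ne <| (Fin.succ_injective n).ne hij
    apply mul_left_cancel₀ hne
    linear_combination hh - hswap
  have hcoeff := coeff_permVars (Equiv.swap i j) c s (f * (rootProd R n m * h))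
  rw [map_mul, map_mul _ (rootProd R n m), permVars_rootProd, hantisymm, mul_neg, mul_neg,
    coeff_neg] at hcoeff
  have hsum : f * (rootProd R n m * h) - permVars (Equiv.swap i j) f * (rootProd R n m * h) =
      C (2 * k : R) * (q * (rootProd R n m * rename Fin.succ (dysonProd R (Fin n) k))) := by
    rw [← sub_mul, hq]
    simp only [map_mul, map_natCast, map_ofNat]
    linear_combination q * rootProd R n m * hh
  have hcoeff_sum := congrArg (coeff (exponent c fun _ ↦ s)) hsum
  rw [coeff_sub, coeff_C_mul, ← moment_apply] at hcoeff_sum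
  apply mul_left_cancel₀ (two_ne_zero (α := R))
  linear_combination hcoeff_sum - hcoeff

/-- Integration by parts: compare coefficients in `x_i ∂_i ((x_0 - x_i) P w)`, `w` being the weight
of `moment`. -/
lemma natCast_mul_moment_sub_mul {i : Fin n} {P : MvPolynomial (Fin (n + 1)) R} {r : Fin n → R}
    (hr : ∀ j ≠ i, IsExchangeMoment m k c s i j P (r j)) :
    (s : R) * moment R m k c s ((X 0 - X i.succ) * P) =
      moment R m k c s (X i.succ * pderiv i.succ ((X 0 - X i.succ) * P)) -
        m * moment R m k c s (X i.succ * P) + k * ∑ j ∈ univ.erase i, r j := by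
  obtain ⟨h, hmul, hsum⟩ := exists_pderiv_dysonProd_eq_sum (R := R) k i
  set T := rootProd R n m
  set D := rename Fin.succ (dysonProd R (Fin n) k)
  have hD : pderiv i.succ D = ∑ j ∈ univ.erase i, rename Fin.succ (h j) := by
    rw [pderiv_rename (Fin.succ_injective n), hsum, map_sum]
  have hterm : ∀ j ∈ univ.erase i, coeff (exponent c fun _ ↦ s)
      ((X 0 - X i.succ) * X i.succ * P * (T * rename Fin.succ (h j))) =
        k * r j := fun j hj ↦ by
    obtain ⟨q, hq, hqr⟩ := hr j (ne_of_mem_erase hj)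
    rw [← hqr]
    refine coeff_mul_rootProd_mul_eq_moment (ne_of_mem_erase hj).symm ?_ hq
    simpa only [map_mul, map_sub, rename_X, map_ofNat, map_natCast] using
      congrArg (rename Fin.succ) (hmul j (ne_of_mem_erase hj))
  have hleibniz : X i.succ * pderiv i.succ ((X 0 - X i.succ) * P * (T * D)) =
      X i.succ * pderiv i.succ ((X 0 - X i.succ) * P) * (T * D) -
        C (m : R) * (X i.succ * P * (T * D)) +
        ∑ j ∈ univ.erase i, (X 0 - X i.succ) * X i.succ * P * (T * rename Fin.succ (h j)) := by
    rw [← mul_sum, ← mul_sum, ← hD, Derivation.leibniz _ ((X 0 - X i.succ) * P),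
      Derivation.leibniz _ T]
    simp only [smul_eq_mul, map_natCast]
    linear_combination X i.succ * P * D * mul_pderiv_rootProd (R := R) m i
  have heuler := coeff_X_mul_pderiv (exponent c fun _ ↦ s) i.succ
    ((X 0 - X i.succ) * P * (T * D))
  rw [hleibniz, coeff_add, coeff_sub, coeff_C_mul, coeff_sum, sum_congr rfl hterm,
    exponent_succ] at heuler
  rw [moment_apply, ← heuler, mul_sum]
  rfl

end IntegrationByParts

section Recurrences

variable {R : Type*} [CommRing R] {n : ℕ}

/-- The monomial `x_0^d ∏_{l ∈ A} x_l`. -/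
noncomputable def markedMonomial (R : Type*) [CommRing R] {n : ℕ} (d : ℕ) (A : Finset (Fin n)) :
    MvPolynomial (Fin (n + 1)) R :=
  X 0 ^ d * ∏ l ∈ A, X l.succ

lemma X_zero_mul_markedMonomial (d : ℕ) (A : Finset (Fin n)) :
    X 0 * markedMonomial R d A = markedMonomial R (d + 1) A := by
  rw [markedMonomial, markedMonomial, pow_succ', mul_assoc]

lemma X_succ_mul_markedMonomial {A : Finset (Fin n)} {i : Fin n} (hi : i ∉ A) (d : ℕ) :
    X i.succ * markedMonomial R d A = markedMonomial R d (insert i A) := by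
  rw [markedMonomial, markedMonomial, prod_insert hi, mul_left_comm]

lemma X_succ_mul_markedMonomial_erase {A : Finset (Fin n)} {i : Fin n} (hi : i ∈ A) (d : ℕ) :
    X i.succ * markedMonomial R d (A.erase i) = markedMonomial R d A := by
  rw [X_succ_mul_markedMonomial (notMem_erase i A), insert_erase hi]

lemma permVars_swap_markedMonomial {A : Finset (Fin n)} {i j : Fin n} (h : i ∈ A ↔ j ∈ A)
    (d : ℕ) : permVars (Equiv.swap i j) (markedMonomial R d A) = markedMonomial R d A := by
  simp only [markedMonomial, map_mul, map_pow, map_prod, permVars_X_zero, permVars_X_succ]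
  rw [prod_comp_swap_of_mem_iff h fun l ↦ (X l.succ : MvPolynomial (Fin (n + 1)) R)]

lemma pderiv_markedMonomial {A : Finset (Fin n)} {i : Fin n} (hi : i ∉ A) (d : ℕ) :
    pderiv i.succ (markedMonomial R d A) = 0 := by
  have hprod : pderiv i.succ (∏ l ∈ A, X l.succ : MvPolynomial (Fin (n + 1)) R) = 0 :=
    derivation_prod_eq_zero _ fun l hl ↦
      pderiv_X_of_ne ((Fin.succ_injective n).ne (ne_of_mem_of_not_mem hl hi))
  rw [markedMonomial, Derivation.leibniz, hprod, Derivation.leibniz_pow,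
    pderiv_X_of_ne (Fin.succ_ne_zero i).symm]
  simp only [smul_zero, add_zero]

variable {m k c s : ℕ}

lemma moment_markedMonomial_empty (d : ℕ) :
    moment R m k (c + d) s (markedMonomial R d (∅ : Finset (Fin n))) =
      moment R m k c s (1 : MvPolynomial (Fin (n + 1)) R) := by
  rw [markedMonomial, prod_empty, moment_X_zero_pow_mul]

lemma moment_markedMonomial_univ :
    moment R m k c (s + 1) (markedMonomial R 0 (univ : Finset (Fin n))) =
      moment R m k c s (1 : MvPolynomial (Fin (n + 1)) R) := by
  rw [markedMonomial, pow_zero, one_mul, ← mul_one (∏ l, _), moment_prod_X_succ_mul]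

lemma moment_X_succ_mul_of_permVars_eq {i j : Fin n} {P : MvPolynomial (Fin (n + 1)) R}
    (hP : permVars (Equiv.swap i j) P = P) :
    moment R m k c s (X j.succ * P) = moment R m k c s (X i.succ * P) := by
  rw [← moment_permVars (Equiv.swap i j) (X i.succ * P), map_mul (permVars _), permVars_X_succ,
    Equiv.swap_apply_left, hP]

lemma isExchangeMoment_of_permVars_eq {i j : Fin n} {P : MvPolynomial (Fin (n + 1)) R}
    (hP : permVars (Equiv.swap i j) P = P) :
    IsExchangeMoment m k c s i j P
      (moment R m k c s (X 0 * P) - 2 * moment R m k c s (X i.succ * P)) := by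
  refine ⟨(X 0 - X i.succ - X j.succ) * P, ?_, ?_⟩
  · simp only [map_mul, map_sub, permVars_X_zero, permVars_X_succ, Equiv.swap_apply_left, hP]
    ring
  · rw [sub_mul, sub_mul, map_sub, map_sub, moment_X_succ_mul_of_permVars_eq hP]
    ring

lemma isExchangeMoment_X_succ_right_mul {i j : Fin n} {W : MvPolynomial (Fin (n + 1)) R}
    (hW : permVars (Equiv.swap i j) W = W) :
    IsExchangeMoment m k c s i j (X j.succ * W)
      (-moment R m k c s (X i.succ * (X j.succ * W))) := by
  refine ⟨-(X i.succ * (X j.succ * W)), ?_, map_neg _ _⟩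
  simp only [map_mul, map_sub, permVars_X_zero, permVars_X_succ, Equiv.swap_apply_left,
    Equiv.swap_apply_right, hW]
  ring

lemma isExchangeMoment_X_succ_left_mul {i j : Fin n} {W : MvPolynomial (Fin (n + 1)) R}
    (hW : permVars (Equiv.swap i j) W = W) :
    IsExchangeMoment m k c s i j (X i.succ * W)
      (2 * (moment R m k c s (X 0 * (X i.succ * W)) -
        moment R m k c s (X i.succ * (X i.succ * W))) -
          moment R m k c s (X j.succ * (X i.succ * W))) := by
  have hX : moment R m k c s (X j.succ * (X 0 * W)) = moment R m k c s (X i.succ * (X 0 * W)) :=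
    moment_X_succ_mul_of_permVars_eq (by rw [map_mul, permVars_X_zero, hW])
  have hsq : moment R m k c s (X j.succ * (X j.succ * W)) =
      moment R m k c s (X i.succ * (X i.succ * W)) := by
    rw [← moment_permVars (Equiv.swap i j) (X i.succ * (X i.succ * W))]
    simp only [map_mul (permVars _), permVars_X_succ, Equiv.swap_apply_left, hW]
  refine ⟨X i.succ * (X 0 * W) + X j.succ * (X 0 * W) - X i.succ * (X i.succ * W) -
    X j.succ * (X i.succ * W) - X j.succ * (X j.succ * W), ?_, ?_⟩
  · simp only [map_mul, map_sub, permVars_X_zero, permVars_X_succ, Equiv.swap_apply_left, hW]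
    ring
  · rw [map_sub, map_sub, map_sub, map_add, hX, hsq, mul_left_comm (X 0)]
    ring

variable [IsDomain R] [CharZero R] (m k c s)

lemma moment_markedMonomial_of_notMem {A : Finset (Fin n)} {i : Fin n} (hi : i ∉ A) (d : ℕ) :
    ((s : R) - k * ((n : R) - 1 - #A)) * moment R m k c s (markedMonomial R (d + 1) A) =
      ((s : R) - 1 - m - k * (2 * ((n : R) - 1) - #A)) *
        moment R m k c s (markedMonomial R d (insert i A)) := by
  rw [← X_zero_mul_markedMonomial, ← X_succ_mul_markedMonomial hi]
  set P := markedMonomial R d A with hPdef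
  have hexchange : ∀ j ≠ i, IsExchangeMoment m k c s i j P
      (if j ∈ A then -moment R m k c s (X i.succ * P)
        else moment R m k c s (X 0 * P) - 2 * moment R m k c s (X i.succ * P)) := fun j _ ↦ by
    split_ifs with hj
    · rw [hPdef, ← X_succ_mul_markedMonomial_erase hj]
      exact isExchangeMoment_X_succ_right_mul (permVars_swap_markedMonomial (by simp [hi]) d)
    · exact isExchangeMoment_of_permVars_eq
        (permVars_swap_markedMonomial (iff_of_false hi hj) d)
  have hderiv : X i.succ * pderiv i.succ ((X 0 - X i.succ) * P) = -(X i.succ * P) := by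
    rw [Derivation.leibniz, pderiv_markedMonomial hi, map_sub, pderiv_X_self,
      pderiv_X_of_ne (Fin.succ_ne_zero i).symm, smul_zero, zero_add, smul_eq_mul]
    ring
  have hparts := natCast_mul_moment_sub_mul hexchange
  rw [sum_erase_ite_mem, if_neg hi, sum_const, nsmul_eq_mul, natCast_card_compl, Fintype.card_fin,
    hderiv, map_neg, sub_mul, map_sub] at hparts
  linear_combination hparts

lemma moment_markedMonomial_of_mem {A : Finset (Fin n)} {i : Fin n} (hi : i ∈ A) (d : ℕ) :
    ((s : R) - 1 - k * (2 * n - 1 - #A)) * moment R m k c s (markedMonomial R (d + 1) A) =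
      ((s : R) - 2 - m - 2 * k * ((n : R) - 1)) *
          moment R m k c s (X i.succ * markedMonomial R d A) -
        k * ∑ j ∈ Aᶜ, moment R m k c s (X j.succ * markedMonomial R d A) := by
  rw [← X_zero_mul_markedMonomial]
  have hPW := X_succ_mul_markedMonomial_erase (R := R) hi d
  set P := markedMonomial R d A
  set W := markedMonomial R d (A.erase i)
  have hexchange : ∀ j ≠ i, IsExchangeMoment m k c s i j P
      (if j ∈ A then moment R m k c s (X 0 * P) - 2 * moment R m k c s (X i.succ * P)
        else 2 * (moment R m k c s (X 0 * P) - moment R m k c s (X i.succ * P)) -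
          moment R m k c s (X j.succ * P)) := fun j _ ↦ by
    split_ifs with hj
    · exact isExchangeMoment_of_permVars_eq (permVars_swap_markedMonomial (iff_of_true hi hj) d)
    · rw [← hPW]
      exact isExchangeMoment_X_succ_left_mul (permVars_swap_markedMonomial (by simp [hj]) d)
  have hderiv : X i.succ * pderiv i.succ ((X 0 - X i.succ) * P) =
      X 0 * P - X i.succ * P - X i.succ * P := by
    rw [← hPW, Derivation.leibniz, Derivation.leibniz _ (X i.succ),
      pderiv_markedMonomial (notMem_erase i A), map_sub, pderiv_X_self,
      pderiv_X_of_ne (Fin.succ_ne_zero i).symm]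
    simp only [smul_eq_mul]
    ring
  have hparts := natCast_mul_moment_sub_mul hexchange
  rw [sum_erase_ite_mem, if_pos hi, sum_sub_distrib, sum_const, nsmul_eq_mul, natCast_card_compl,
    Fintype.card_fin, hderiv, map_sub, map_sub, sub_mul, map_sub] at hparts
  linear_combination hparts

end Recurrences

section Morris

variable {R : Type*} [CommRing R]

lemma prod_mul_moment_markedMonomial_empty [IsDomain R] [CharZero R] (m k c s : ℕ) {n : ℕ}
    (A : Finset (Fin n)) (d : ℕ) :
    (∏ r ∈ range #A, ((s : R) - k * ((n : R) - 1 - r))) *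
          moment R m k c s (markedMonomial R (d + #A) (∅ : Finset (Fin n))) =
      (∏ r ∈ range #A, ((s : R) - 1 - m - k * (2 * ((n : R) - 1) - r))) *
        moment R m k c s (markedMonomial R d A) := by
  induction A using Finset.induction_on generalizing d with
  | empty => simp
  | insert i A hi ih =>
    have hstep := moment_markedMonomial_of_notMem (R := R) m k c s hi d
    have ih' := ih (d + 1)
    rw [add_right_comm d 1] at ih'
    rw [card_insert_of_notMem hi, prod_range_succ, prod_range_succ, ← add_assoc]
    linear_combination ((s : R) - k * ((n : R) - 1 - #A)) * ih' +
      (∏ r ∈ range #A, ((s : R) - 1 - m - k * (2 * ((n : R) - 1) - r))) * hstep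

lemma prod_range_neg_reflect (f : ℕ → R) (n : ℕ) :
    ∏ r ∈ range n, -f (n - 1 - r) = (-1) ^ n * ∏ r ∈ range n, f r := by
  rw [prod_neg, card_range, prod_range_reflect]

lemma prod_sub_pow_mul_sub_pow (n a b : ℕ) :
    ∏ l : Fin n, (X 0 - X l.succ : MvPolynomial (Fin (n + 1)) R) ^ a * (X l.succ - X 0) ^ b =
      C ((-1) ^ (n * b)) * rootProd R n (a + b) := by
  have hfactor (l : Fin n) : (X 0 - X l.succ : MvPolynomial (Fin (n + 1)) R) ^ a *
      (X l.succ - X 0) ^ b = C ((-1) ^ b) * (X 0 - X l.succ) ^ (a + b) := by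
    rw [← neg_sub (X 0) (X l.succ), neg_pow, pow_add, map_pow, map_neg, map_one]
    ring
  rw [prod_congr rfl fun l _ ↦ hfactor l, prod_mul_distrib, prod_const, card_univ,
    Fintype.card_fin, ← map_pow, ← pow_mul, mul_comm b n, rootProd]

lemma prod_mul_moment_one [IsDomain R] [CharZero R] (n a b k c : ℕ) :
    (∏ r ∈ range n, ((b : R) + 1 + k * r)) *
        moment R (a + b + 1) k c (b + (n - 1) * k + 1) (1 : MvPolynomial (Fin (n + 1)) R) =
      (-1) ^ n * (∏ r ∈ range n, ((a : R) + 1 + k * r)) *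
        moment R (a + b + 1) k (c + n) (b + (n - 1) * k) (1 : MvPolynomial (Fin (n + 1)) R) := by
  have hpred {r : ℕ} (hr : r ∈ range n) : ((n - 1 : ℕ) : R) = n - 1 :=
    Nat.cast_pred (Nat.zero_lt_of_lt (mem_range.1 hr))
  have hchain := prod_mul_moment_markedMonomial_empty (R := R) (a + b + 1) k (c + n)
    (b + (n - 1) * k + 1) (univ : Finset (Fin n)) 0
  have hleft : ∏ r ∈ range n, (((b + (n - 1) * k + 1 : ℕ) : R) - k * ((n : R) - 1 - r)) =
      ∏ r ∈ range n, ((b : R) + 1 + k * r) := prod_congr rfl fun r hr ↦ by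
    push_cast [hpred hr]
    ring
  have hright : ∏ r ∈ range n, (((b + (n - 1) * k + 1 : ℕ) : R) - 1 - (a + b + 1 : ℕ) -
      k * (2 * ((n : R) - 1) - r)) = (-1) ^ n * ∏ r ∈ range n, ((a : R) + 1 + k * r) := by
    rw [← prod_range_neg_reflect fun r ↦ (a : R) + 1 + k * r]
    refine prod_congr rfl fun r hr ↦ ?_
    rw [Nat.sub_sub, add_comm 1 r, Nat.cast_sub (mem_range.1 hr)]
    push_cast [hpred hr]
    ring
  rwa [card_fin, hleft, hright, zero_add, moment_markedMonomial_empty,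
    moment_markedMonomial_univ] at hchain

/-- The Morris constant term
`CT ∏_l (1 - x_l/x_0)^a (1 - x_0/x_l)^b ∏_{i ≠ j} (1 - x_i/x_j)^k` in `x_0, …, x_n`,
with denominators cleared. -/
noncomputable def morrisCT (n a b k : ℕ) : ℚ :=
  coeff (exponent (n * a) fun _ : Fin n ↦ b + (n - 1) * k)
    ((∏ l : Fin n, (X 0 - X l.succ) ^ a * (X l.succ - X 0) ^ b) *
      rename Fin.succ (dysonProd ℚ (Fin n) k))

lemma morrisCT_zero (a b k : ℕ) : morrisCT 0 a b k = 1 := by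
  have hexp : (exponent 0 fun _ : Fin 0 ↦ b) = 0 := by
    ext i
    cases i using Fin.cases with
    | zero => simp
    | succ l => exact l.elim0
  simp [morrisCT, dysonProd, hexp]

lemma morrisCT_eq_moment (n a b k : ℕ) :
    morrisCT n a b k = (-1) ^ (n * b) *
      moment ℚ (a + b) k (n * a) (b + (n - 1) * k) (1 : MvPolynomial (Fin (n + 1)) ℚ) := by
  rw [morrisCT, prod_sub_pow_mul_sub_pow, mul_assoc, coeff_C_mul, moment_apply, one_mul]

lemma morrisCT_succ_mul_prod (n a b k : ℕ) :
    morrisCT n (a + 1) b k * ∏ r ∈ range n, ((a : ℚ) + 1 + k * r) =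
      (∏ r ∈ range n, ((b : ℚ) + 1 + k * r)) * morrisCT n a (b + 1) k := by
  have hmoment := prod_mul_moment_one (R := ℚ) n a b k (n * a)
  have hsign : (-1 : ℚ) ^ n * (-1) ^ n = 1 := by rw [← mul_pow, neg_mul_neg, one_mul, one_pow]
  rw [morrisCT_eq_moment, morrisCT_eq_moment, add_right_comm a 1 b, add_right_comm b 1, mul_add_one,
    mul_add_one, pow_add, ← add_assoc a b 1]
  linear_combination -(-1) ^ (n * b) * (-1) ^ n * hmoment - (-1) ^ (n * b) *
    moment ℚ (a + b + 1) k (n * a + n) (b + (n - 1) * k) (1 : MvPolynomial (Fin (n + 1)) ℚ) *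
      (∏ r ∈ range n, ((a : ℚ) + 1 + k * r)) * hsign

/-- For `b = 0` the factor of the weight involving `x_0` is monic in `x_0`, so that extracting the
top coefficient leaves the Dyson product. -/
lemma morrisCT_zero_right (n a k : ℕ) :
    morrisCT n a 0 k =
      coeff (Finsupp.equivFunOnFinite.symm fun _ ↦ (n - 1) * k) (dysonProd ℚ (Fin n) k) := by
  have hexp : (exponent (n * a) fun _ : Fin n ↦ 0 + (n - 1) * k) =
      (Finsupp.equivFunOnFinite.symm fun _ ↦ (n - 1) * k).cons (n * a) := by
    ext i
    cases i using Fin.cases <;> simp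
  have hrename : finSuccEquiv ℚ n (rename Fin.succ (dysonProd ℚ (Fin n) k)) =
      Polynomial.C (dysonProd ℚ (Fin n) k) := by
    simp only [dysonProd, map_prod, map_pow, map_sub, rename_X, finSuccEquiv_X_succ]
  have hroot : finSuccEquiv ℚ n (∏ l : Fin n, (X 0 - X l.succ) ^ a * (X l.succ - X 0) ^ 0) =
      ∏ l : Fin n, (Polynomial.X - Polynomial.C (X l)) ^ a := by
    simp only [map_prod, map_pow, map_sub, finSuccEquiv_X_succ, finSuccEquiv_X_zero,
      pow_zero, mul_one]
  have hmonic (l : Fin n) :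
      ((Polynomial.X - Polynomial.C (X l : MvPolynomial (Fin n) ℚ)) ^ a).Monic :=
    (Polynomial.monic_X_sub_C _).pow a
  have hdegree : (∏ l : Fin n,
      (Polynomial.X - Polynomial.C (X l : MvPolynomial (Fin n) ℚ)) ^ a).natDegree = n * a := by
    simp [Polynomial.natDegree_prod_of_monic _ _ fun l _ ↦ hmonic l]
  rw [morrisCT, hexp, ← finSuccEquiv_coeff_coeff, map_mul, hrename, hroot, Polynomial.coeff_mul_C,
    ← hdegree, (Polynomial.monic_prod_of_monic _ _ fun l _ ↦ hmonic l).coeff_natDegree, one_mul]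

lemma morrisCT_succ_zero_right (n a k : ℕ) : morrisCT (n + 1) a 0 k = morrisCT n k k k := by
  rw [morrisCT_zero_right, dysonProd_succ, morrisCT]
  congr 1
  ext i
  cases i using Fin.cases with
  | zero => simp
  | succ l =>
    obtain ⟨N, rfl⟩ := Nat.exists_eq_succ_of_ne_zero l.pos.ne'
    simp [Nat.succ_mul, add_comm]

/-- The product side of Morris's identity, the first factor of Forrester's product. -/
noncomputable def morrisProd (n a b k : ℕ) : ℚ :=
  ∏ l ∈ range n,
    (((a + b + k * l).factorial * (k * (l + 1)).factorial : ℚ) /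
      ((a + k * l).factorial * (b + k * l).factorial * k.factorial))

lemma morrisProd_succ_mul_prod (n a b k : ℕ) :
    morrisProd n (a + 1) b k * ∏ r ∈ range n, ((a : ℚ) + 1 + k * r) =
      (∏ r ∈ range n, ((b : ℚ) + 1 + k * r)) * morrisProd n a (b + 1) k := by
  rw [morrisProd, morrisProd, ← prod_mul_distrib, ← prod_mul_distrib]
  refine prod_congr rfl fun l _ ↦ ?_
  rw [add_right_comm a 1, add_right_comm b 1, add_right_comm a 1, ← add_assoc a b 1,
    add_right_comm (a + b) 1, Nat.factorial_succ (a + k * l), Nat.factorial_succ (b + k * l)]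
  push_cast
  field_simp
  ring

lemma morrisProd_succ_zero_right (n a k : ℕ) : morrisProd (n + 1) a 0 k = morrisProd n k k k := by
  have hzero : morrisProd (n + 1) a 0 k =
      ∏ l ∈ range (n + 1), ((k * (l + 1)).factorial : ℚ) / ((k * l).factorial * k.factorial) :=
    prod_congr rfl fun l _ ↦ by
      rw [add_zero, zero_add]
      field_simp
  rw [hzero, prod_range_succ', morrisProd, zero_add, mul_one, mul_zero, Nat.factorial_zero,
    Nat.cast_one, one_mul, div_self (by positivity), mul_one]
  refine prod_congr rfl fun l _ ↦ ?_
  rw [show k + k + k * l = k * (l + 1 + 1) by ring, show k + k * l = k * (l + 1) by ring]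
  field_simp

lemma morrisCT_eq_morrisProd (n a b k : ℕ) : morrisCT n a b k = morrisProd n a b k := by
  induction n generalizing a b k with
  | zero => rw [morrisCT_zero, morrisProd, range_zero, prod_empty]
  | succ n ih =>
    induction b generalizing a with
    | zero => rw [morrisCT_succ_zero_right, ih, morrisProd_succ_zero_right]
    | succ b ihb =>
      have hne : ∏ r ∈ range (n + 1), ((b : ℚ) + 1 + k * r) ≠ 0 :=
        prod_ne_zero_iff.2 fun r _ ↦ by positivity
      apply mul_left_cancel₀ hne
      rw [← morrisCT_succ_mul_prod, ihb, morrisProd_succ_mul_prod]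

end Morris

section TwoExtraVariables

lemma mul_moment_X_succ_mul_markedMonomial_erase {R : Type*} [CommRing R] [IsDomain R] [CharZero R]
    (m k c s : ℕ) {n : ℕ} {p q : Fin n} (hpq : p ≠ q) (d : ℕ) :
    (s : R) * ((s : R) - 2 - m - 2 * k * ((n : R) - 1)) *
        moment R m k c s (X p.succ * markedMonomial R d (univ.erase q)) =
      (((s : R) - 1 - k * n) * ((s : R) - 1 - m - k * ((n : R) - 1)) + k * s) *
        moment R m k c s (markedMonomial R d (univ : Finset (Fin n))) := by
  have hcompl : (univ.erase q)ᶜ = {q} := by rw [compl_erase, compl_univ, insert_empty]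
  have hcard : (#(univ.erase q) : R) = n - 1 := by
    rw [card_erase_of_mem (mem_univ q), card_fin, Nat.cast_pred q.pos]
  have hnotMem := moment_markedMonomial_of_notMem (R := R) m k c s (notMem_erase q univ) d
  have hmem := moment_markedMonomial_of_mem (R := R) m k c s
    (mem_erase.2 ⟨hpq, mem_univ p⟩) d
  rw [insert_erase (mem_univ q), hcard] at hnotMem
  rw [hcompl, sum_singleton, X_succ_mul_markedMonomial_erase (mem_univ q), hcard] at hmem
  linear_combination ((s : R) - 1 - k * n) * hnotMem - (s : R) * hmem

lemma forresterCT_two_eq_moment (n₀ a b k : ℕ) {p q : Fin (n₀ + 2)} (hp : (p : ℕ) = n₀)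
    (hq : (q : ℕ) = n₀ + 1) :
    forresterCT n₀ 2 a b k = (-1) ^ ((n₀ + 2) * b) * moment ℚ (a + b) k ((n₀ + 2) * a)
      (b + (n₀ + 1) * k + 1) (-(X p.succ - X q.succ) ^ 2 * markedMonomial ℚ 0 {p, q}ᶜ) := by
  have hpq : p ≠ q := by omega
  have hfilter : univ.filter (fun l : Fin (n₀ + 2) ↦ n₀ ≤ l) = {p, q} := by
    ext l
    simp only [mem_filter_univ, mem_insert, mem_singleton, Fin.ext_iff]
    omega
  have hexp : (fun l : Fin (n₀ + 2) ↦ b + (n₀ + 2 - 1) * k + (if n₀ ≤ (l : ℕ) then 2 - 1 else 0) +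
      (if l ∈ ({p, q}ᶜ : Finset _) then 1 else 0)) = fun _ ↦ b + (n₀ + 1) * k + 1 := by
    funext l
    have hmem : l ∈ ({p, q} : Finset _) ↔ n₀ ≤ l := by rw [← hfilter, mem_filter_univ]
    simp only [mem_compl, hmem]
    split_ifs <;> simp
  have hmonomial : (∏ l, X l.succ ^ (if l ∈ ({p, q}ᶜ : Finset _) then 1 else 0) :
      MvPolynomial (Fin (n₀ + 3)) ℚ) = ∏ l ∈ {p, q}ᶜ, X l.succ := by
    simp only [pow_ite, pow_one, pow_zero, prod_ite_mem, univ_inter]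
  have hsq : ((X p.succ - X q.succ) * (X q.succ - X p.succ) : MvPolynomial (Fin (n₀ + 3)) ℚ) =
      -(X p.succ - X q.succ) ^ 2 := by ring
  have hdyson : rename Fin.succ (dysonProd ℚ (Fin (n₀ + 2)) k) =
      ∏ j : Fin (n₀ + 2), ∏ i ∈ univ.erase j, (X j.succ - X i.succ) ^ k := by
    simp only [dysonProd, map_prod, map_pow, map_sub, rename_X]
  have hshift := coeff_exponent_add ((n₀ + 2) * a) 0
    (fun l : Fin (n₀ + 2) ↦ b + (n₀ + 2 - 1) * k + (if n₀ ≤ (l : ℕ) then 2 - 1 else 0))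
    (fun l ↦ if l ∈ ({p, q}ᶜ : Finset _) then 1 else 0)
    (-(X p.succ - X q.succ) ^ 2 * (C ((-1) ^ ((n₀ + 2) * b)) * rootProd ℚ (n₀ + 2) (a + b)) *
      rename Fin.succ (dysonProd ℚ (Fin (n₀ + 2)) k))
  rw [hexp, hmonomial, add_zero] at hshift
  rw [forresterCT, hfilter, prod_pair_prod_erase hpq, hsq, prod_sub_pow_mul_sub_pow, ← hdyson]
  refine hshift.symm.trans ?_
  rw [moment_apply, ← coeff_C_mul, markedMonomial]
  congr 1
  ring

lemma neg_sub_sq_mul_markedMonomial {R : Type*} [CommRing R] {n : ℕ} {p q : Fin n} (hpq : p ≠ q)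
    (d : ℕ) :
    -(X p.succ - X q.succ) ^ 2 * markedMonomial R d {p, q}ᶜ =
      2 * markedMonomial R d univ - X p.succ * markedMonomial R d (univ.erase q) -
        X q.succ * markedMonomial R d (univ.erase p) := by
  have hcompl : ({p, q}ᶜ : Finset (Fin n)) = (univ.erase q).erase p := by
    rw [compl_insert, compl_singleton]
  rw [← X_succ_mul_markedMonomial_erase (mem_univ q),
    ← X_succ_mul_markedMonomial_erase (mem_erase.2 ⟨hpq, mem_univ p⟩),
    ← X_succ_mul_markedMonomial_erase (mem_erase.2 ⟨hpq.symm, mem_univ q⟩), hcompl,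
    erase_right_comm]
  ring

lemma mul_forresterRHS_two (n₀ a b k : ℕ) :
    ((b : ℚ) + 1 + k * (n₀ + 1)) * ((a : ℚ) + 1 + k * (n₀ + 1)) * forresterRHS n₀ 2 a b k =
      2 * (1 + k * (n₀ + 2)) * (a + b + 1 + k * (n₀ + 1)) * morrisProd (n₀ + 2) a b k := by
  rw [forresterRHS, morrisProd, prod_range_succ, prod_range_succ, prod_range_succ,
    prod_range_succ, prod_range_zero, ← morrisProd]
  have hab : (k + 1) * 1 + a + b + k * n₀ = a + b + k * (n₀ + 1) + 1 := by ring
  have hk : k * 1 + k + 1 + k * n₀ = k * (n₀ + 1 + 1) + 1 := by ring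
  have ha : (k + 1) * 1 + a + k * n₀ = a + k * (n₀ + 1) + 1 := by ring
  have hb : (k + 1) * 1 + b + k * n₀ = b + k * (n₀ + 1) + 1 := by ring
  rw [hab, hk, ha, hb]
  simp only [mul_zero, zero_add, add_zero, ← mul_add_one, add_comm k (k * n₀), Nat.factorial_succ]
  push_cast
  field_simp
  ring

lemma mul_forresterCT_two (n₀ a b k : ℕ) :
    ((b : ℚ) + 1 + k * (n₀ + 1)) * ((a : ℚ) + 1 + k * (n₀ + 1)) * forresterCT n₀ 2 a b k =
      2 * (1 + k * (n₀ + 2)) * (a + b + 1 + k * (n₀ + 1)) * morrisCT (n₀ + 2) a b k := by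
  set p : Fin (n₀ + 2) := (Fin.last n₀).castSucc
  set q : Fin (n₀ + 2) := Fin.last (n₀ + 1)
  have hpq : p ≠ q := (Fin.castSucc_lt_last _).ne
  have hp := mul_moment_X_succ_mul_markedMonomial_erase (R := ℚ) (a + b) k ((n₀ + 2) * a)
    (b + (n₀ + 1) * k + 1) hpq 0
  have hq := mul_moment_X_succ_mul_markedMonomial_erase (R := ℚ) (a + b) k ((n₀ + 2) * a)
    (b + (n₀ + 1) * k + 1) hpq.symm 0
  rw [forresterCT_two_eq_moment n₀ a b k (p := p) (q := q) rfl rfl,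
    neg_sub_sq_mul_markedMonomial hpq, map_sub, map_sub, two_mul, map_add, morrisCT_eq_moment,
    ← moment_markedMonomial_univ, Nat.add_sub_assoc one_le_two]
  push_cast at hp hq
  linear_combination (-1) ^ ((n₀ + 2) * b) * (hp + hq)

end TwoExtraVariables

end Forrester

/-- **Forrester's conjecture in the case `n₁ = 2`** (Corollary 5.3, first case). -/
theorem forrester_n1_eq_two (n₀ a b k : ℕ) :
    forresterCT n₀ 2 a b k = forresterRHS n₀ 2 a b k := by
  have hne : ((b : ℚ) + 1 + k * (n₀ + 1)) * ((a : ℚ) + 1 + k * (n₀ + 1)) ≠ 0 := by positivity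
  apply mul_left_cancel₀ hne
  rw [Forrester.mul_forresterCT_two, Forrester.morrisCT_eq_morrisProd,
    Forrester.mul_forresterRHS_two]
end

section
/- Forrester's conjecture holds for $n_1 = n-1$: for nonnegative integers $a, b, k$ and $n\ge 1$ with $n_0 = 1$, the constant term $\mathrm{CT}_x \prod_{i,j=2,\,i\ne j}^{n}(1-x_i/x_j)\, H(x_0,\ldots,x_n;a,b,k)$ equals $M_1(a,b,k)\prod_{j=0}^{n-2}\frac{(j+1)((k+1)j+a+b+k)!\,(kj+k+j+k)!}{k!\,((k+1)j+a+k)!\,((k+1)j+b+k)!}$. -/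
open MvPolynomial Finset

/-!
Putting `x_0 = 1`, the constant term becomes, up to sign, the coefficient of `∏ x_l ^ (δ_l + b)` in
`∏ (1 - x_l) ^ (a + b) * G`, where `G` is again a constant term numerator of the same kind, in the
variables `x_1, …, x_n`. For fixed `b` this coefficient is a polynomial in `a` of degree at most
`n b`, so it is determined by its value at `a = 0`, a coefficient of `G`, once its `n b` roots are
known.

The roots come from the discriminant factors of `G`. At `a = -r` the binomial coefficients in which
an exponent `e_l` of `G` enters are polynomials in `e_l` of degree less than `r - b` as long as
`e_l < δ_l + r`, and they vanish in this range if `r ≤ b`. Pairing `G` with a polynomial in the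
exponents of the variables from `U` applies a differential operator to `G` on the diagonal of `U`,
and this gives `0` if the degree is smaller than the order of vanishing of `G` there. If, on the
other hand, too many exponents are as large as `δ_l + r`, then the variables that remain cannot
supply the degree that this order of vanishing demands.

Applied repeatedly this proves Morris's identity. For Forrester's constant term with `n₀ = 1` the
polynomial `G` is the Morris numerator in which `x_1` plays the role of `x_0`, with parameters
`(k, k, k + 1)`.
-/

open scoped fwdDiff

section FiniteDifferences

variable {M N A : Type*} [AddCommMonoid M] [AddCommMonoid N]

/-- The maps `M → A` which are polynomial of degree at most `d` in the directions of `S`: those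
annihilated by any `d + 1` forward differences with steps in `S`. -/
def fwdDiffDegreeLE (A : Type*) [AddCommGroup A] (S : Set M) : ℕ → Submodule ℤ (M → A)
  | 0 => ⨅ h ∈ S, LinearMap.ker (fwdDiff_aux.fwdDiffₗ M A h)
  | d + 1 => ⨅ h ∈ S, (fwdDiffDegreeLE A S d).comap (fwdDiff_aux.fwdDiffₗ M A h)

section AddCommGroup

variable [AddCommGroup A] {S : Set M} {d : ℕ} {f : M → A}

lemma mem_fwdDiffDegreeLE_zero :
    f ∈ fwdDiffDegreeLE A S 0 ↔ ∀ h ∈ S, Δ_[h] f = 0 := by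
  simp [fwdDiffDegreeLE, fwdDiff_aux.coe_fwdDiffₗ]

lemma mem_fwdDiffDegreeLE_succ :
    f ∈ fwdDiffDegreeLE A S (d + 1) ↔ ∀ h ∈ S, Δ_[h] f ∈ fwdDiffDegreeLE A S d := by
  simp [fwdDiffDegreeLE, fwdDiff_aux.coe_fwdDiffₗ]

lemma fwdDiffDegreeLE_mono (S : Set M) :
    Monotone (fwdDiffDegreeLE A S) := by
  refine monotone_nat_of_le_succ fun d => ?_
  induction d with
  | zero =>
    intro f hf
    refine mem_fwdDiffDegreeLE_succ.2 fun h hh => ?_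
    rw [mem_fwdDiffDegreeLE_zero.1 hf h hh]
    exact zero_mem _
  | succ d ih =>
    exact fun f hf =>
      mem_fwdDiffDegreeLE_succ.2 fun h hh => ih (mem_fwdDiffDegreeLE_succ.1 hf h hh)

lemma fwdDiff_mem_fwdDiffDegreeLE (hf : f ∈ fwdDiffDegreeLE A S d) {h : M} (hh : h ∈ S) :
    Δ_[h] f ∈ fwdDiffDegreeLE A S d :=
  mem_fwdDiffDegreeLE_succ.1 (fwdDiffDegreeLE_mono S d.le_succ hf) h hh

lemma comp_mem_fwdDiffDegreeLE {T : Set N} {g : N → A} (φ : M →+ N)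
    (hφ : ∀ h ∈ S, φ h = 0 ∨ φ h ∈ T) (hg : g ∈ fwdDiffDegreeLE A T d) :
    g ∘ φ ∈ fwdDiffDegreeLE A S d := by
  have fwdDiff_comp (g : N → A) (h : M) : Δ_[h] (g ∘ φ) = (Δ_[φ h] g) ∘ φ := by
    funext x
    simp only [fwdDiff, Function.comp_apply, map_add]
  have fwdDiff_zero (g : N → A) : Δ_[0] g = 0 := by
    funext x
    simp only [fwdDiff, add_zero, sub_self, Pi.zero_apply]
  induction d generalizing g with
  | zero =>
    refine mem_fwdDiffDegreeLE_zero.2 fun h hh => ?_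
    rw [fwdDiff_comp]
    rcases hφ h hh with h0 | hT
    · rw [h0, fwdDiff_zero, Pi.zero_comp]
    · rw [mem_fwdDiffDegreeLE_zero.1 hg _ hT, Pi.zero_comp]
  | succ d ih =>
    refine mem_fwdDiffDegreeLE_succ.2 fun h hh => ?_
    rw [fwdDiff_comp]
    rcases hφ h hh with h0 | hT
    · rw [h0, fwdDiff_zero, Pi.zero_comp]
      exact zero_mem _
    · exact ih (mem_fwdDiffDegreeLE_succ.1 hg _ hT)

end AddCommGroup

section CommRing

variable [CommRing A] {S : Set M}

lemma fwdDiff_mul (h : M) (f g : M → A) :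
    Δ_[h] (f * g) = Δ_[h] f * (g + Δ_[h] g) + f * Δ_[h] g := by
  funext x
  simp only [fwdDiff, Pi.mul_apply, Pi.add_apply]
  ring

lemma mul_mem_fwdDiffDegreeLE {a b : ℕ} {f g : M → A} (hf : f ∈ fwdDiffDegreeLE A S a)
    (hg : g ∈ fwdDiffDegreeLE A S b) : f * g ∈ fwdDiffDegreeLE A S (a + b) := by
  induction hN : a + b generalizing a b f g with
  | zero =>
    obtain ⟨rfl, rfl⟩ : a = 0 ∧ b = 0 := by omega
    refine mem_fwdDiffDegreeLE_zero.2 fun h hh => ?_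
    rw [fwdDiff_mul, mem_fwdDiffDegreeLE_zero.1 hf h hh, mem_fwdDiffDegreeLE_zero.1 hg h hh,
      zero_mul, mul_zero, add_zero]
  | succ N ih =>
    refine mem_fwdDiffDegreeLE_succ.2 fun h hh => ?_
    rw [fwdDiff_mul]
    refine add_mem ?_ ?_
    · cases a with
      | zero =>
        rw [mem_fwdDiffDegreeLE_zero.1 hf h hh, zero_mul]
        exact zero_mem _
      | succ a =>
        exact ih (mem_fwdDiffDegreeLE_succ.1 hf h hh)
          (add_mem hg (fwdDiff_mem_fwdDiffDegreeLE hg hh)) (by omega)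
    · cases b with
      | zero =>
        rw [mem_fwdDiffDegreeLE_zero.1 hg h hh, mul_zero]
        exact zero_mem _
      | succ b => exact ih hf (mem_fwdDiffDegreeLE_succ.1 hg h hh) (by omega)

lemma one_mem_fwdDiffDegreeLE : (1 : M → A) ∈ fwdDiffDegreeLE A S 0 :=
  mem_fwdDiffDegreeLE_zero.2 fun h _ => fwdDiff_const h (1 : A)

lemma prod_mem_fwdDiffDegreeLE {ι : Type*} {s : Finset ι} {d : ℕ} {f : ι → M → A}
    (hf : ∀ i ∈ s, f i ∈ fwdDiffDegreeLE A S d) :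
    ∏ i ∈ s, f i ∈ fwdDiffDegreeLE A S (#s * d) := by
  classical
  induction s using Finset.induction_on with
  | empty => simpa using one_mem_fwdDiffDegreeLE
  | insert i s hi ih =>
    rw [prod_insert hi, card_insert_of_notMem hi, add_one_mul, add_comm]
    exact mul_mem_fwdDiffDegreeLE (hf i (mem_insert_self i s))
      (ih fun j hj => hf j (mem_insert_of_mem hj))

lemma choose_sub_mem_fwdDiffDegreeLE (c : ℤ) (d : ℕ) :
    (fun e : ℕ => ((Ring.choose (c - e) d : ℤ) : A)) ∈ fwdDiffDegreeLE A {1} d := by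
  induction d generalizing c with
  | zero =>
    refine mem_fwdDiffDegreeLE_zero.2 fun h _ => ?_
    simp only [Ring.choose_zero_right]
    exact fwdDiff_const h _
  | succ d ih =>
    refine mem_fwdDiffDegreeLE_succ.2 fun h hh => ?_
    rw [Set.mem_singleton_iff.1 hh]
    have fwdDiff_choose : Δ_[1] (fun e : ℕ => ((Ring.choose (c - e) (d + 1) : ℤ) : A)) =
        -fun e : ℕ => ((Ring.choose (c - 1 - e) d : ℤ) : A) := by
      funext e
      have pascal := Ring.choose_succ_succ (c - 1 - e) d
      rw [show c - 1 - e + 1 = c - e by ring] at pascal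
      rw [fwdDiff, Pi.neg_apply, pascal, Nat.cast_succ, show c - (e + 1) = c - 1 - e by ring]
      push_cast
      ring
    rw [fwdDiff_choose]
    exact neg_mem (ih (c - 1))

end CommRing

end FiniteDifferences

section Pairing

variable {σ R A : Type*} [CommRing R] [CommRing A] [Algebra R A]

/-- The pairing `∑ e, G_e • f e` of a polynomial `G = ∑ e, G_e X^e` with a function `f` of the
exponents, as a linear form in `G` depending linearly on `f`. -/
noncomputable def pairing : ((σ →₀ ℕ) → A) ≃ₗ[A] (MvPolynomial σ R →ₗ[R] A) :=
  (basisMonomials σ R).constr A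

lemma pairing_monomial (f : (σ →₀ ℕ) → A) (e : σ →₀ ℕ) (c : R) :
    pairing f (monomial e c) = c • f e := by
  have h : monomial e c = c • basisMonomials σ R e := by
    rw [coe_basisMonomials, smul_monomial, smul_eq_mul, mul_one]
  rw [h, map_smul, pairing, Module.Basis.constr_basis]

lemma pairing_apply (f : (σ →₀ ℕ) → A) (G : MvPolynomial σ R) :
    pairing f G = ∑ e ∈ G.support, coeff e G • f e := by
  conv_lhs => rw [G.as_sum, map_sum]
  exact sum_congr rfl fun e _ => pairing_monomial f e _

lemma dvd_pairing {c : A} {f : (σ →₀ ℕ) → A} {G : MvPolynomial σ R}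
    (h : ∀ e ∈ G.support, c ∣ f e) : c ∣ pairing f G := by
  rw [pairing_apply]
  exact dvd_sum fun e he => dvd_smul_of_dvd _ (h e he)

lemma pairing_X_sub_X_mul (f : (σ →₀ ℕ) → A) (i j : σ) (G : MvPolynomial σ R) :
    pairing f ((X j - X i) * G) =
      pairing (Δ_[Finsupp.single j 1] f - Δ_[Finsupp.single i 1] f) G := by
  induction G using MvPolynomial.induction_on' with
  | monomial e c =>
    rw [sub_mul, map_sub, X, X, monomial_mul, monomial_mul, one_mul, pairing_monomial,
      pairing_monomial, pairing_monomial, Pi.sub_apply, fwdDiff, fwdDiff, sub_sub_sub_cancel_right,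
      smul_sub, add_comm e, add_comm e]
  | add p q hp hq => rw [mul_add, map_add, map_add, hp, hq]

/-- The ideal of the diagonal on which all the variables from `U` coincide. -/
noncomputable def diagIdeal (R : Type*) [CommRing R] (U : Finset σ) : Ideal (MvPolynomial σ R) :=
  Ideal.span {P | ∃ i ∈ U, ∃ j ∈ U, P = X j - X i}

lemma X_sub_X_mem_diagIdeal {U : Finset σ} {i j : σ} (hj : j ∈ U) (hi : i ∈ U) :
    X j - X i ∈ diagIdeal R U :=
  Ideal.subset_span ⟨i, hi, j, hj, rfl⟩

lemma pairing_eq_zero_of_mem_diagIdeal_mul {U : Finset σ} {J : Ideal (MvPolynomial σ R)}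
    {f : (σ →₀ ℕ) → A} {G : MvPolynomial σ R}
    (hf : ∀ i ∈ U, ∀ j ∈ U, ∀ H ∈ J,
      pairing (Δ_[Finsupp.single j 1] f - Δ_[Finsupp.single i 1] f) H = 0)
    (hG : G ∈ diagIdeal R U * J) : pairing f G = 0 := by
  induction hG using Submodule.mul_induction_on' with
  | mem_mul_mem P hP H hH =>
    induction hP using Submodule.span_induction generalizing H with
    | mem P hP =>
      obtain ⟨i, hi, j, hj, rfl⟩ := hP
      rw [pairing_X_sub_X_mul, hf i hi j hj H hH]
    | zero => rw [zero_mul, map_zero]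
    | add P Q _ _ hP hQ => rw [add_mul, map_add, hP H hH, hQ H hH, add_zero]
    | smul Q P _ hP =>
      rw [smul_eq_mul, mul_comm Q, mul_assoc]
      exact hP _ (J.mul_mem_left Q hH)
  | add P _ Q _ hP hQ => rw [map_add, hP, hQ, add_zero]

lemma pairing_eq_zero_of_mem_diagIdeal_pow {U : Finset σ} {d : ℕ} {f : (σ →₀ ℕ) → A}
    {G : MvPolynomial σ R}
    (hf : f ∈ fwdDiffDegreeLE A ((fun i => Finsupp.single i 1) '' (U : Set σ)) d)
    (hG : G ∈ diagIdeal R U ^ (d + 1)) : pairing f G = 0 := by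
  have single_mem {i : σ} (hi : i ∈ U) := Set.mem_image_of_mem (Finsupp.single · 1) (mem_coe.2 hi)
  induction d generalizing f G with
  | zero =>
    rw [pow_succ'] at hG
    refine pairing_eq_zero_of_mem_diagIdeal_mul (fun i hi j hj H _ => ?_) hG
    rw [mem_fwdDiffDegreeLE_zero.1 hf _ (single_mem hi),
      mem_fwdDiffDegreeLE_zero.1 hf _ (single_mem hj), sub_zero, map_zero, LinearMap.zero_apply]
  | succ d ih =>
    rw [pow_succ'] at hG
    refine pairing_eq_zero_of_mem_diagIdeal_mul (fun i hi j hj H hH => ih ?_ hH) hG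
    exact sub_mem (mem_fwdDiffDegreeLE_succ.1 hf _ (single_mem hj))
      (mem_fwdDiffDegreeLE_succ.1 hf _ (single_mem hi))

lemma one_le_sum_of_mem_diagIdeal {U : Finset σ} {G : MvPolynomial σ R} (hG : G ∈ diagIdeal R U)
    {e : σ →₀ ℕ} (he : e ∈ G.support) : 1 ≤ ∑ i ∈ U, e i := by
  have diagIdeal_le : diagIdeal R U ≤ Ideal.span (X '' (U : Set σ)) := by
    refine Ideal.span_le.2 ?_
    rintro - ⟨i, hi, j, hj, rfl⟩
    exact sub_mem (Ideal.subset_span ⟨j, hj, rfl⟩) (Ideal.subset_span ⟨i, hi, rfl⟩)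
  obtain ⟨i, hi, hei⟩ := mem_ideal_span_X_image.1 (diagIdeal_le hG) e he
  exact (Nat.one_le_iff_ne_zero.2 hei).trans (single_le_sum (fun _ _ => Nat.zero_le _) hi)

lemma le_sum_of_mem_diagIdeal_pow {U : Finset σ} {c : ℕ} {G : MvPolynomial σ R}
    (hG : G ∈ diagIdeal R U ^ c) {e : σ →₀ ℕ} (he : e ∈ G.support) : c ≤ ∑ i ∈ U, e i := by
  classical
  induction c generalizing G e with
  | zero => exact Nat.zero_le _
  | succ c ih =>
    rw [pow_succ] at hG
    induction hG using Submodule.mul_induction_on' with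
    | mem_mul_mem P hP Q hQ =>
      obtain ⟨p, hp, q, hq, rfl⟩ := mem_add.1 (support_mul P Q he)
      simp only [Finsupp.add_apply, sum_add_distrib]
      exact add_le_add (ih hP hp) (one_le_sum_of_mem_diagIdeal hQ hq)
    | add P _ Q _ hP hQ =>
      exact (mem_union.1 (support_add he)).elim hP hQ

end Pairing

section BinomialCoefficients

open scoped Polynomial

/-- The coefficient of `x ^ (d - e)` in `(1 - x) ^ (A + b)`, as a polynomial in the indeterminate
`A`; it is `0` when `d < e`. -/
noncomputable def binomCoeff (b d e : ℕ) : ℚ[X] :=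
  if e ≤ d then (-1) ^ (d - e) * Ring.choose (Polynomial.X + (b : ℚ[X])) (d - e) else 0

variable {b d e r : ℕ}

lemma eval_binomCoeff (he : e ≤ d) (x : ℚ) :
    (binomCoeff b d e).eval x = (-1) ^ (d - e) * Ring.choose (x + b) (d - e) := by
  rw [binomCoeff, if_pos he, Polynomial.eval_mul, Polynomial.eval_pow, Polynomial.eval_neg,
    Polynomial.eval_one, ← Polynomial.coe_evalRingHom, Ring.map_choose, map_add,
    Polynomial.coe_evalRingHom, Polynomial.eval_X, Polynomial.eval_natCast]

lemma eval_natCast_binomCoeff (he : e ≤ d) (a : ℕ) :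
    (binomCoeff b d e).eval (a : ℚ) = (-1) ^ (d - e) * (a + b).choose (d - e) := by
  rw [eval_binomCoeff he, ← Nat.cast_add, Ring.choose_natCast]

lemma natDegree_choose_le {R : Type*} [Field R] [CharZero R] (p : R[X]) (n : ℕ) :
    (Ring.choose p n).natDegree ≤ n * p.natDegree := by
  have algebraMap_int : algebraMap ℤ R[X] = Polynomial.C.comp (algebraMap ℤ R) :=
    RingHom.ext_int _ _
  have factorial_smul : (n.factorial : R) • Ring.choose p n = (descPochhammer R n).comp p := by
    rw [Nat.cast_smul_eq_nsmul, ← Ring.descPochhammer_eq_factorial_smul_choose,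
      ← Polynomial.aeval_eq_smeval, ← descPochhammer_map (algebraMap ℤ R), Polynomial.comp,
      Polynomial.aeval_def, Polynomial.eval₂_map, algebraMap_int]
  have factorial_ne_zero : (n.factorial : R) ≠ 0 := Nat.cast_ne_zero.2 n.factorial_ne_zero
  rw [← Polynomial.natDegree_smul _ factorial_ne_zero, factorial_smul]
  exact Polynomial.natDegree_comp_le.trans_eq (by rw [descPochhammer_natDegree])

lemma natDegree_binomCoeff_le (b d e : ℕ) : (binomCoeff b d e).natDegree ≤ d - e := by
  rw [binomCoeff]
  split_ifs
  · have h := natDegree_choose_le (Polynomial.X + (b : ℚ[X])) (d - e)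
    rw [← Polynomial.C_eq_natCast, Polynomial.natDegree_X_add_C, mul_one] at h
    rcases neg_one_pow_eq_or ℚ[X] (d - e) with h1 | h1
    · rwa [h1, one_mul]
    · rwa [h1, neg_one_mul, Polynomial.natDegree_neg]
  · exact Nat.zero_le _

lemma eval_neg_binomCoeff_of_le (hr : r ≤ b) (he : e + b < d + r) :
    (binomCoeff b d e).eval (-r : ℚ) = 0 := by
  obtain ⟨s, rfl⟩ := Nat.exists_eq_add_of_le hr
  rw [eval_binomCoeff (by omega), Nat.cast_add, neg_add_cancel_left, Ring.choose_natCast,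
    Nat.choose_eq_zero_of_lt (by omega), Nat.cast_zero, mul_zero]

/-- The `(d - e)`-th coefficient of `(1 - x) ^ (-(s + 1))` is a polynomial in `e` of degree `s`,
which for `d < e ≤ d + s` has the required value `0`. -/
lemma eval_neg_binomCoeff (s : ℕ) (he : e ≤ d + s) :
    (binomCoeff b d e).eval (-(b + s + 1) : ℚ) = (Ring.choose ((d + s : ℤ) - e) s : ℤ) := by
  obtain ⟨t, ht⟩ := Nat.exists_eq_add_of_le he
  have h : (d + s : ℤ) - e = t := by omega
  rw [h, Ring.choose_natCast, Int.cast_natCast]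
  by_cases hed : e ≤ d
  · have hs : (-(b + s + 1) + b : ℚ) = -(s + 1) := by ring
    obtain ⟨m, rfl⟩ := Nat.exists_eq_add_of_le hed
    obtain rfl : t = m + s := by omega
    have hm : (s + 1 + m - 1 : ℚ) = (m + s : ℕ) := by push_cast; ring
    rw [eval_binomCoeff hed, hs, Nat.add_sub_cancel_left, Ring.choose_neg, hm, Ring.choose_natCast,
      Units.smul_def, zsmul_eq_mul, Int.cast_negOnePow_natCast, ← mul_assoc, ← mul_pow,
      neg_one_mul, neg_neg, one_pow, one_mul, Nat.choose_symm_add]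
  · rw [binomCoeff, if_neg hed, Polynomial.eval_zero, Nat.choose_eq_zero_of_lt (by omega),
      Nat.cast_zero]

/-- Modulo `A + r`, a binomial coefficient is a polynomial in `e` of degree less than `r - b`, up to
an error supported on large `e`. -/
lemma exists_binomCoeff_eq_add (b d r : ℕ) : ∃ u v w : ℕ → ℚ[X],
    (∀ e, binomCoeff b d e = u e + v e + (Polynomial.X + Polynomial.C (r : ℚ)) * w e) ∧
    u ∈ fwdDiffDegreeLE ℚ[X] {1} (r - b - 1) ∧ (r ≤ b → u = 0) ∧
    ∀ e, e + b < d + r → v e = 0 := by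
  obtain ⟨u, hu, hu0, hue⟩ : ∃ u : ℕ → ℚ[X], u ∈ fwdDiffDegreeLE ℚ[X] {1} (r - b - 1) ∧
      (r ≤ b → u = 0) ∧
      ∀ e, e + b < d + r → (binomCoeff b d e).eval (-r : ℚ) = (u e).eval (-r : ℚ) := by
    by_cases hr : r ≤ b
    · refine ⟨0, zero_mem _, fun _ => rfl, fun e he => ?_⟩
      rw [eval_neg_binomCoeff_of_le hr he, Pi.zero_apply, Polynomial.eval_zero]
    · obtain ⟨s, rfl⟩ := Nat.exists_eq_add_of_lt (not_le.1 hr)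
      have hs : b + s + 1 - b - 1 = s := by omega
      rw [hs]
      refine ⟨_, choose_sub_mem_fwdDiffDegreeLE (d + s : ℤ) s, fun h => absurd h hr,
        fun e he => ?_⟩
      rw [Polynomial.eval_intCast, ← eval_neg_binomCoeff (b := b) s (by omega), Nat.cast_add_one,
        Nat.cast_add]
  let v : ℕ → ℚ[X] := fun e => if e + b < d + r then 0 else binomCoeff b d e - u e
  have dvd (e : ℕ) : Polynomial.X + Polynomial.C (r : ℚ) ∣ binomCoeff b d e - (u e + v e) := by
    rw [← sub_neg_eq_add, ← Polynomial.C_neg, Polynomial.dvd_iff_isRoot,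
      Polynomial.IsRoot, Polynomial.eval_sub, Polynomial.eval_add]
    by_cases he : e + b < d + r
    · rw [show v e = 0 from if_pos he, Polynomial.eval_zero, add_zero, hue e he, sub_self]
    · rw [show v e = binomCoeff b d e - u e from if_neg he, Polynomial.eval_sub,
        add_sub_cancel, sub_self]
  choose w hw using dvd
  exact ⟨u, v, w, fun e => by rw [← hw]; ring, hu, hu0, fun e he => if_pos he⟩

end BinomialCoefficients

section VanishingProfile

open scoped Polynomial

variable {ι : Type*} [Fintype ι]

lemma prod_mem_fwdDiffDegreeLE_of_coord {A : Type*} [CommRing A] {U : Finset ι} {s : ℕ}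
    {g : ι → ℕ → A} (hg : ∀ l ∈ U, g l ∈ fwdDiffDegreeLE A {1} s) :
    (fun e : ι →₀ ℕ => ∏ l, g l (e l)) ∈
      fwdDiffDegreeLE A ((fun i => Finsupp.single i 1) '' (U : Set ι)) (#U * s) := by
  classical
  let coord (l : ι) : (ι →₀ ℕ) → A := g l ∘ Finsupp.applyAddHom l
  have split : (fun e : ι →₀ ℕ => ∏ l, g l (e l)) =
      (∏ l ∈ U, coord l) * ∏ l ∈ Uᶜ, coord l := by
    rw [prod_mul_prod_compl]
    exact funext fun e => by rw [Finset.prod_apply]; rfl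
  rw [split, ← add_zero (#U * s), ← mul_zero #Uᶜ]
  refine mul_mem_fwdDiffDegreeLE (prod_mem_fwdDiffDegreeLE fun l hl => ?_)
    (prod_mem_fwdDiffDegreeLE fun l hl => ?_)
  · refine comp_mem_fwdDiffDegreeLE _ ?_ (hg l hl)
    rintro - ⟨i, -, rfl⟩
    by_cases h : i = l
    · exact .inr (by simp [h])
    · exact .inl (by simp [h])
  · refine comp_mem_fwdDiffDegreeLE (T := ∅) _ ?_ (mem_fwdDiffDegreeLE_zero.2 (by simp))
    rintro - ⟨i, hi, rfl⟩
    have h : i ≠ l := fun h => mem_compl.1 hl (h ▸ hi)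
    exact .inl (by simp [h])

/-- The coefficient of `∏ l, X l ^ (δ l + b)` in `(∏ l, (1 - X l) ^ (A + b)) * G` as a polynomial in
the indeterminate `A`. -/
noncomputable def coeffPoly (G : MvPolynomial ι ℚ) (δ : ι → ℕ) (b : ℕ) : ℚ[X] :=
  pairing (fun e => ∏ l, binomCoeff b (δ l + b) (e l)) G

variable {G : MvPolynomial ι ℚ} {δ : ι → ℕ} {e : ι →₀ ℕ}

lemma sum_eq_of_mem_support {R : Type*} [CommSemiring R] {P : MvPolynomial ι R} {N : ℕ}
    (hP : P.IsHomogeneous N) (he : e ∈ P.support) : ∑ l, e l = N := by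
  rw [← Finsupp.degree_eq_sum, Finsupp.degree_eq_weight_one]
  exact hP (mem_support_iff.1 he)

lemma natDegree_coeffPoly_le (hG : G.IsHomogeneous (∑ l, δ l)) (b : ℕ) :
    (coeffPoly G δ b).natDegree ≤ Fintype.card ι * b := by
  rw [coeffPoly, pairing_apply]
  refine Polynomial.natDegree_sum_le_of_forall_le _ _ fun e he =>
    (Polynomial.natDegree_smul_le _ _).trans ?_
  by_cases hle : ∀ l, e l ≤ δ l + b
  · have natDegree_le : (∏ l, binomCoeff b (δ l + b) (e l)).natDegree ≤ ∑ l, (δ l + b - e l) :=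
      (Polynomial.natDegree_prod_le _ _).trans
        (sum_le_sum fun l _ => natDegree_binomCoeff_le b (δ l + b) (e l))
    refine natDegree_le.trans_eq ?_
    rw [sum_tsub_distrib _ fun l _ => hle l, sum_add_distrib, sum_eq_of_mem_support hG he,
      Nat.add_sub_cancel_left, sum_const, card_univ, smul_eq_mul]
  · obtain ⟨l, hl⟩ := not_forall.1 hle
    rw [prod_eq_zero (mem_univ l) (if_neg hl), Polynomial.natDegree_zero]
    exact Nat.zero_le _

lemma eval_zero_coeffPoly (hG : G.IsHomogeneous (∑ l, δ l)) (b : ℕ) :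
    (coeffPoly G δ b).eval 0 =
      (-1) ^ (Fintype.card ι * b) * coeff (Finsupp.equivFunOnFinite.symm δ) G := by
  set δ' := Finsupp.equivFunOnFinite.symm δ
  have eval_eq_zero (e : ι →₀ ℕ) (he : e ∈ G.support) (hne : e ≠ δ') :
      (coeff e G • ∏ l, binomCoeff b (δ l + b) (e l)).eval 0 = 0 := by
    obtain ⟨l, hl⟩ : ∃ l, e l < δ l := by
      by_contra! hle
      have h := (sum_eq_sum_iff_of_le fun l _ => hle l).1 (sum_eq_of_mem_support hG he).symm
      exact hne (Finsupp.ext fun l => (h l (mem_univ l)).symm)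
    rw [Polynomial.eval_smul, Polynomial.eval_prod, prod_eq_zero (mem_univ l), smul_zero]
    rw [← Nat.cast_zero, eval_natCast_binomCoeff (by omega), Nat.choose_eq_zero_of_lt (by omega),
      Nat.cast_zero, mul_zero]
  have eval_self (l : ι) : (binomCoeff b (δ l + b) (δ' l)).eval 0 = (-1) ^ b := by
    change (binomCoeff b (δ l + b) (δ l)).eval 0 = (-1) ^ b
    rw [← Nat.cast_zero, eval_natCast_binomCoeff (Nat.le_add_right _ _), Nat.add_sub_cancel_left,
      zero_add, Nat.choose_self, Nat.cast_one, mul_one]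
  rw [coeffPoly, pairing_apply, Polynomial.eval_finsetSum, sum_eq_single δ' eval_eq_zero]
  · rw [Polynomial.eval_smul, Polynomial.eval_prod, prod_congr rfl fun l _ => eval_self l,
      prod_const, card_univ, ← pow_mul, smul_eq_mul, mul_comm b, mul_comm]
  · intro h
    rw [notMem_support_iff.1 h, zero_smul, Polynomial.eval_zero]

variable [DecidableEq ι]

/-- The conditions on `G`, relative to an exponent `δ` and a sequence `β`, under which the
coefficient of `∏ l, X l ^ (δ l + b)` in `(∏ l, (1 - X l) ^ (a + b)) * G`, viewed as a polynomial
in `a`, vanishes at `-r` with multiplicity at least `#{i | β i < r ∧ r ≤ β i + b}`. -/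
structure HasVanishingProfile (G : MvPolynomial ι ℚ) (δ : ι → ℕ) (β : ℕ → ℕ) : Prop where
  isHomogeneous : G.IsHomogeneous (∑ l, δ l)
  monotone : Monotone β
  mem_diagIdeal_pow {U : Finset ι} {s : ℕ} : U.Nonempty → s < β (#U - 1) →
    G ∈ diagIdeal ℚ U ^ (#U * s + 1)
  exists_le {V : Finset ι} {e : ι →₀ ℕ} : V.Nonempty → e ∈ G.support →
    ∃ l ∈ V, e l ≤ δ l + β #Vᶜ

variable {β : ℕ → ℕ}

lemma card_filter_le_of_card_add {x y z n b r : ℕ} (hβ : Monotone β) (hn : x + y + z = n)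
    (hx : x = 0 ∨ β (x - 1) + b < r) (hy : y = 0 ∨ r ≤ β (n - y)) :
    #{i ∈ range n | β i < r ∧ r ≤ β i + b} ≤ z := by
  have subset : {i ∈ range n | β i < r ∧ r ≤ β i + b} ⊆ Ico x (n - y) := by
    intro i hi
    obtain ⟨hin, hlt, hle⟩ := mem_filter.1 hi
    rw [mem_range] at hin
    refine mem_Ico.2 ⟨?_, ?_⟩
    · refine hx.elim (by omega) fun hx => le_of_not_gt fun hix => ?_
      have := hβ (show i ≤ x - 1 by omega)
      omega
    · refine hy.elim (by omega) fun hy => lt_of_not_ge fun hyi => ?_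
      have := hβ hyi
      omega
  exact (card_le_card subset).trans (by rw [Nat.card_Ico]; omega)

lemma pow_dvd_pairing_prod (hG : HasVanishingProfile G δ β) {b r : ℕ} {U V W : Finset ι}
    (hcard : #U + #V + #W = Fintype.card ι) {g : ι → ℕ → ℚ[X]}
    (hU : ∀ l ∈ U, g l ∈ fwdDiffDegreeLE ℚ[X] {1} (r - b - 1))
    (hU0 : r ≤ b → ∀ l ∈ U, g l = 0) (hV : ∀ l ∈ V, ∀ e < δ l + r, g l e = 0) {c : ℚ[X]}
    (hW : ∀ l ∈ W, ∀ e, c ∣ g l e) :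
    c ^ #{i ∈ range (Fintype.card ι) | β i < r ∧ r ≤ β i + b} ∣
      pairing (fun e => ∏ l, g l (e l)) G := by
  by_cases hUr : U.Nonempty ∧ r ≤ β (#U - 1) + b
  · convert dvd_zero _
    obtain hrb | hbr := le_or_gt r b
    · obtain ⟨l, hl⟩ := hUr.1
      rw [pairing_apply]
      refine sum_eq_zero fun e _ => ?_
      rw [prod_eq_zero (mem_univ l) (by rw [hU0 hrb l hl, Pi.zero_apply]), smul_zero]
    · exact pairing_eq_zero_of_mem_diagIdeal_pow (prod_mem_fwdDiffDegreeLE_of_coord hU)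
        (hG.mem_diagIdeal_pow hUr.1 (by omega))
  by_cases hVr : V.Nonempty ∧ β #Vᶜ < r
  · convert dvd_zero _
    rw [pairing_apply]
    refine sum_eq_zero fun e he => ?_
    obtain ⟨l, hl, hle⟩ := hG.exists_le hVr.1 he
    rw [prod_eq_zero (mem_univ l) (hV l hl _ (by omega)), smul_zero]
  have card_le : #{i ∈ range (Fintype.card ι) | β i < r ∧ r ≤ β i + b} ≤ #W := by
    refine card_filter_le_of_card_add hG.monotone hcard ?_ ?_
    · by_contra! h
      exact hUr ⟨card_pos.1 (by omega), h.2⟩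
    · by_contra! h
      exact hVr ⟨card_pos.1 (by omega), by rw [card_compl]; exact h.2⟩
  refine (pow_dvd_pow c card_le).trans (dvd_pairing fun e _ => ?_)
  rw [← prod_const]
  exact (prod_dvd_prod_of_dvd _ _ fun l hl => hW l hl (e l)).trans
    (prod_dvd_prod_of_subset _ _ _ (subset_univ W))

lemma pow_dvd_coeffPoly (hG : HasVanishingProfile G δ β) (b r : ℕ) :
    (Polynomial.X + Polynomial.C (r : ℚ)) ^ #{i ∈ range (Fintype.card ι) | β i < r ∧ r ≤ β i + b} ∣
      coeffPoly G δ b := by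
  choose u v w huvw hu hu0 hv using fun l => exists_binomCoeff_eq_add b (δ l + b) r
  let part (i : Fin 3) (l : ι) : ℕ → ℚ[X] :=
    ![u l, v l, fun e => (Polynomial.X + Polynomial.C (r : ℚ)) * w l e] i
  have expand : coeffPoly G δ b =
      ∑ p : ι → Fin 3, pairing (fun e => ∏ l, part (p l) l (e l)) G := by
    have h : (fun e : ι →₀ ℕ => ∏ l, binomCoeff b (δ l + b) (e l)) =
        ∑ p : ι → Fin 3, fun e => ∏ l, part (p l) l (e l) := by
      funext e
      rw [Finset.sum_apply, ← Fintype.prod_sum fun l i => part i l (e l)]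
      exact prod_congr rfl fun l _ => by rw [huvw, Fin.sum_univ_three]; rfl
    rw [coeffPoly, h, map_sum, LinearMap.sum_apply]
  rw [expand]
  refine dvd_sum fun p _ => pow_dvd_pairing_prod hG (U := {l | p l = 0}) (V := {l | p l = 1})
    (W := {l | p l = 2}) ?_ ?_ ?_ ?_ ?_
  · have card_fibers := card_eq_sum_card_fiberwise (f := p) (s := univ) (t := univ)
      fun l _ => mem_univ _
    rw [Fin.sum_univ_three, card_univ] at card_fibers
    exact card_fibers.symm
  · intro l hl
    rw [(mem_filter.1 hl).2]
    exact hu l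
  · intro hrb l hl
    rw [(mem_filter.1 hl).2]
    exact hu0 l hrb
  · intro l hl e he
    rw [(mem_filter.1 hl).2]
    exact hv l e (by omega)
  · intro l hl e
    rw [(mem_filter.1 hl).2]
    exact dvd_mul_right _ _

/-- The product of the linear factors `A + r` that `pow_dvd_coeffPoly` provides. -/
noncomputable def rootProd (β : ℕ → ℕ) (n b : ℕ) : ℚ[X] :=
  ∏ i ∈ range n, ∏ r ∈ Ioc (β i) (β i + b), (Polynomial.X + Polynomial.C (r : ℚ))

lemma rootProd_dvd_coeffPoly (hG : HasVanishingProfile G δ β) (b : ℕ) :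
    rootProd β (Fintype.card ι) b ∣ coeffPoly G δ b := by
  have h : rootProd β (Fintype.card ι) b =
      ∏ r ∈ (range (Fintype.card ι)).biUnion fun i => Ioc (β i) (β i + b),
        (Polynomial.X + Polynomial.C (r : ℚ)) ^
          #{i ∈ range (Fintype.card ι) | β i < r ∧ r ≤ β i + b} := by
    simp only [rootProd, ← prod_const]
    refine prod_comm' fun i r => ?_
    simp only [mem_Ioc, mem_biUnion, mem_filter]
    tauto
  rw [h]
  refine prod_dvd_of_coprime (fun r _ s _ hrs => ?_) fun r _ => pow_dvd_coeffPoly hG b r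
  simp only [← sub_neg_eq_add, ← Polynomial.C_neg]
  exact (Polynomial.pairwise_coprime_X_sub_C (neg_injective.comp Nat.cast_injective) hrs).pow

lemma monic_rootProd (β : ℕ → ℕ) (n b : ℕ) : (rootProd β n b).Monic :=
  Polynomial.monic_prod_of_monic _ _ fun _ _ =>
    Polynomial.monic_prod_of_monic _ _ fun _ _ => Polynomial.monic_X_add_C _

lemma natDegree_rootProd (β : ℕ → ℕ) (n b : ℕ) : (rootProd β n b).natDegree = n * b := by
  have natDegree_inner (i : ℕ) :
      (∏ r ∈ Ioc (β i) (β i + b), (Polynomial.X + Polynomial.C (r : ℚ))).natDegree = b := by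
    rw [Polynomial.natDegree_prod_of_monic _ _ fun _ _ => Polynomial.monic_X_add_C _]
    simp only [Polynomial.natDegree_X_add_C, sum_const, Nat.card_Ioc, Nat.add_sub_cancel_left,
      smul_eq_mul, mul_one]
  rw [rootProd, Polynomial.natDegree_prod_of_monic _ _ fun _ _ =>
    Polynomial.monic_prod_of_monic _ _ fun _ _ => Polynomial.monic_X_add_C _]
  simp only [natDegree_inner, sum_const, card_range, smul_eq_mul]

lemma prod_Ioc_add_eq_factorial_div (a m b : ℕ) :
    ∏ r ∈ Ioc m (m + b), (a + r : ℚ) = (a + b + m).factorial / (a + m).factorial := by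
  rw [eq_div_iff (Nat.cast_ne_zero.2 (Nat.factorial_ne_zero _))]
  induction b with
  | zero => simp
  | succ b ih =>
    rw [← add_assoc, prod_Ioc_succ_top (Nat.le_add_right m b), mul_right_comm, ih,
      show a + (b + 1) + m = a + b + m + 1 by ring, Nat.factorial_succ]
    push_cast
    ring

lemma eval_rootProd (β : ℕ → ℕ) (n b a : ℕ) : (rootProd β n b).eval (a : ℚ) =
    ∏ i ∈ range n, ((a + b + β i).factorial / (a + β i).factorial : ℚ) := by
  simp only [rootProd, Polynomial.eval_prod, Polynomial.eval_add, Polynomial.eval_X,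
    Polynomial.eval_C, prod_Ioc_add_eq_factorial_div]

lemma eval_coeffPoly (hG : HasVanishingProfile G δ β) (a b : ℕ) :
    (coeffPoly G δ b).eval (a : ℚ) =
      (-1) ^ (Fintype.card ι * b) * coeff (Finsupp.equivFunOnFinite.symm δ) G *
        ∏ i ∈ range (Fintype.card ι), ((a + b + β i).factorial * (β i).factorial /
          ((a + β i).factorial * (b + β i).factorial) : ℚ) := by
  have eval_eq (x : ℕ) : (coeffPoly G δ b).eval (x : ℚ) = (coeffPoly G δ b).leadingCoeff *
      ∏ i ∈ range (Fintype.card ι), ((x + b + β i).factorial / (x + β i).factorial : ℚ) := by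
    conv_lhs => rw [Polynomial.eq_leadingCoeff_mul_of_monic_of_dvd_of_natDegree_le
      (monic_rootProd β (Fintype.card ι) b) (rootProd_dvd_coeffPoly hG b)
      ((natDegree_coeffPoly_le hG.isHomogeneous b).trans_eq (natDegree_rootProd _ _ _).symm)]
    rw [Polynomial.eval_mul, Polynomial.eval_C, eval_rootProd]
  rw [← eval_zero_coeffPoly hG.isHomogeneous, ← Nat.cast_zero, eval_eq, eval_eq, mul_assoc,
    ← prod_mul_distrib]
  congr 1
  refine prod_congr rfl fun i _ => ?_
  have factorial_ne_zero (m : ℕ) : (m.factorial : ℚ) ≠ 0 := Nat.cast_ne_zero.2 m.factorial_ne_zero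
  rw [zero_add, zero_add]
  field_simp [factorial_ne_zero]

end VanishingProfile

section Coefficients

variable {R ι : Type*} [CommRing R]

lemma coeff_one_sub_X_pow (n j : ℕ) :
    ((1 - Polynomial.X : Polynomial R) ^ n).coeff j = (-1) ^ j * n.choose j := by
  have h : (1 - Polynomial.X : Polynomial R) ^ n =
      ((1 + Polynomial.X) ^ n).comp (Polynomial.C (-1) * Polynomial.X) := by
    simp only [Polynomial.pow_comp, Polynomial.add_comp, Polynomial.one_comp, Polynomial.X_comp,
      Polynomial.C_neg, Polynomial.C_1, neg_one_mul, ← sub_eq_add_neg]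
  rw [h, Polynomial.comp_C_mul_X_coeff, Polynomial.coeff_one_add_X_pow, mul_comm]

lemma coeff_prod_aeval_X [Fintype ι] (p : ι → Polynomial R) (d : ι →₀ ℕ) :
    coeff d (∏ l, Polynomial.aeval (X l) (p l)) = ∏ l, (p l).coeff (d l) := by
  classical
  have aeval_eq (l : ι) : Polynomial.aeval (X l) (p l) =
      ∑ k ∈ range ((p l).natDegree + d l + 1), monomial (Finsupp.single l k) ((p l).coeff k) := by
    rw [Polynomial.aeval_eq_sum_range' (n := (p l).natDegree + d l + 1) (by omega)]
    refine sum_congr rfl fun k _ => ?_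
    rw [X_pow_eq_monomial, smul_monomial, smul_eq_mul, mul_one]
  have coeff_eq (x : ι → ℕ) :
      coeff d (∏ l, monomial (Finsupp.single l (x l)) ((p l).coeff (x l))) =
        if x = d then ∏ l, (p l).coeff (x l) else 0 := by
    rw [← monomial_sum_prod, coeff_monomial]
    have univ_sum : ∑ l, Finsupp.single l (x l) = Finsupp.equivFunOnFinite.symm x :=
      Finsupp.univ_sum_single (Finsupp.equivFunOnFinite.symm x)
    exact if_congr (by rw [univ_sum, Equiv.symm_apply_eq]; rfl) rfl rfl
  rw [prod_congr rfl fun l _ => aeval_eq l, prod_univ_sum, coeff_sum]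
  simp only [coeff_eq]
  rw [sum_ite_eq_of_mem']
  exact Fintype.mem_piFinset.2 fun l => mem_range.2 (by omega)

/-- The substitution `X 0 = 1`. -/
noncomputable def dehomogenize (R : Type*) [CommRing R] (n : ℕ) :
    MvPolynomial (Fin (n + 1)) R →ₐ[R] MvPolynomial (Fin n) R :=
  aeval (Fin.cons 1 X)

lemma dehomogenize_X_zero (n : ℕ) : dehomogenize R n (X 0) = 1 := by
  rw [dehomogenize, aeval_X, Fin.cons_zero]

lemma dehomogenize_comp_X_comp_succ (n : ℕ) : dehomogenize R n ∘ X ∘ Fin.succ = X :=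
  funext fun l => by
    rw [Function.comp_apply, Function.comp_apply, dehomogenize, aeval_X, Fin.cons_succ]

lemma dehomogenize_rename_succ {n : ℕ} (P : MvPolynomial (Fin n) R) :
    dehomogenize R n (rename Fin.succ P) = P := by
  have cons_comp_succ : (Fin.cons 1 X : Fin (n + 1) → MvPolynomial (Fin n) R) ∘ Fin.succ = X := rfl
  rw [dehomogenize, aeval_rename, cons_comp_succ, aeval_X_left_apply]

lemma dehomogenize_monomial {n : ℕ} (e : Fin (n + 1) →₀ ℕ) (c : R) :
    dehomogenize R n (monomial e c) = monomial e.tail c := by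
  rw [dehomogenize, aeval_monomial, algebraMap_eq, monomial_eq,
    Finsupp.prod_fintype _ _ fun _ => pow_zero _, Finsupp.prod_fintype _ _ fun _ => pow_zero _,
    Fin.prod_univ_succ, Fin.cons_zero, one_pow, one_mul]
  rfl

lemma coeff_cons_eq_coeff_dehomogenize {n N i : ℕ} {P : MvPolynomial (Fin (n + 1)) R}
    (hP : P.IsHomogeneous N) {d : Fin n →₀ ℕ} (hd : i + ∑ l, d l = N) :
    coeff (d.cons i) P = coeff d (dehomogenize R n P) := by
  have tail_eq_iff {e : Fin (n + 1) →₀ ℕ} (he : e ∈ P.support) : e.tail = d ↔ e = d.cons i := by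
    refine ⟨fun h => ?_, fun h => by rw [h, Finsupp.tail_cons]⟩
    have sum_eq := sum_eq_of_mem_support hP he
    rw [Fin.sum_univ_succ, ← hd, ← h] at sum_eq
    rw [← Finsupp.cons_tail e, h, Nat.add_right_cancel sum_eq]
  conv_rhs => rw [P.as_sum, map_sum, coeff_sum]
  simp only [dehomogenize_monomial, coeff_monomial]
  rw [sum_congr rfl fun e he => if_congr (tail_eq_iff he) rfl rfl, sum_ite_eq']
  split_ifs with h
  · rfl
  · exact notMem_support_iff.1 h

/-- The product `∏ l, (y - Y l) ^ a * (Y l - y) ^ b`, through which a point `y` interacts with a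
family `Y` in Forrester's constant term. -/
def crossProd [Fintype ι] (y : R) (Y : ι → R) (a b : ℕ) : R :=
  ∏ l, (y - Y l) ^ a * (Y l - y) ^ b

lemma crossProd_eq [Fintype ι] (y : R) (Y : ι → R) (a b : ℕ) :
    crossProd y Y a b = (-1) ^ (Fintype.card ι * b) * ∏ l, (y - Y l) ^ (a + b) := by
  have h (l : ι) : (y - Y l) ^ a * (Y l - y) ^ b = (-1) ^ b * (y - Y l) ^ (a + b) := by
    rw [← neg_sub y, neg_pow, pow_add, mul_left_comm]
  rw [crossProd, prod_congr rfl fun l _ => h l, prod_mul_distrib, prod_const, card_univ, ← pow_mul,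
    mul_comm b]

lemma map_crossProd {S F : Type*} [CommRing S] [FunLike F R S] [RingHomClass F R S] [Fintype ι]
    (φ : F) (y : R) (Y : ι → R) (a b : ℕ) :
    φ (crossProd y Y a b) = crossProd (φ y) (φ ∘ Y) a b := by
  simp only [crossProd, map_prod, map_mul, map_pow, map_sub, Function.comp_apply]

lemma isHomogeneous_crossProd {σ : Type*} [Fintype ι] (j : σ) (g : ι → σ) (a b : ℕ) :
    (crossProd (X j) (X ∘ g) a b : MvPolynomial σ R).IsHomogeneous (Fintype.card ι * (a + b)) := by
  have isHomogeneous_sub (i j : σ) : (X i - X j : MvPolynomial σ R).IsHomogeneous 1 :=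
    (isHomogeneous_X R i).sub (isHomogeneous_X R j)
  rw [← card_univ, ← smul_eq_mul, ← sum_const]
  refine IsHomogeneous.prod _ _ _ fun l _ => IsHomogeneous.mul ?_ ?_
  · simpa using (isHomogeneous_sub j (g l)).pow a
  · simpa using (isHomogeneous_sub (g l) j).pow b

lemma eval_binomCoeff_eq_coeff (a b d e : ℕ) : (binomCoeff b d e).eval (a : ℚ) =
    if e ≤ d then ((1 - Polynomial.X : Polynomial ℚ) ^ (a + b)).coeff (d - e) else 0 := by
  split_ifs with h
  · rw [eval_natCast_binomCoeff h, coeff_one_sub_X_pow]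
  · rw [binomCoeff, if_neg h, Polynomial.eval_zero]

lemma eval_coeffPoly_eq_coeff [Fintype ι] (G : MvPolynomial ι ℚ) (δ : ι → ℕ) (a b : ℕ) :
    (coeffPoly G δ b).eval (a : ℚ) =
      coeff (Finsupp.equivFunOnFinite.symm fun l => δ l + b)
        ((∏ l, (1 - X l) ^ (a + b)) * G) := by
  classical
  have prod_eq : (∏ l, (1 - X l) ^ (a + b) : MvPolynomial ι ℚ) =
      ∏ l, Polynomial.aeval (X l) ((1 - Polynomial.X : Polynomial ℚ) ^ (a + b)) := by
    simp only [map_pow, map_sub, map_one, Polynomial.aeval_X]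
  conv_rhs => rw [G.as_sum, mul_sum, coeff_sum]
  rw [coeffPoly, pairing_apply, Polynomial.eval_finsetSum]
  refine sum_congr rfl fun e _ => ?_
  rw [Polynomial.eval_smul, Polynomial.eval_prod, smul_eq_mul,
    prod_congr rfl fun l _ => eval_binomCoeff_eq_coeff a b (δ l + b) (e l), Fintype.prod_ite_zero,
    coeff_mul_monomial', prod_eq, coeff_prod_aeval_X, mul_ite, mul_zero, mul_comm]
  exact if_congr Iff.rfl rfl rfl

lemma coeff_crossProd_mul_rename {n : ℕ} {G : MvPolynomial (Fin n) ℚ} {δ : Fin n → ℕ}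
    {β : ℕ → ℕ} (hG : HasVanishingProfile G δ β) (a b : ℕ) :
    coeff (Finsupp.equivFunOnFinite.symm (Fin.cons (n * a) fun l => δ l + b))
        (crossProd (X 0) (X ∘ Fin.succ) a b * rename Fin.succ G) =
      coeff (Finsupp.equivFunOnFinite.symm δ) G *
        ∏ i ∈ range n, ((a + b + β i).factorial * (β i).factorial /
          ((a + β i).factorial * (b + β i).factorial) : ℚ) := by
  have isHomogeneous : (crossProd (X 0) (X ∘ Fin.succ) a b * rename Fin.succ G :
      MvPolynomial (Fin (n + 1)) ℚ).IsHomogeneous (n * (a + b) + ∑ l, δ l) := by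
    have h := isHomogeneous_crossProd (R := ℚ) 0 (Fin.succ (n := n)) a b
    rw [Fintype.card_fin] at h
    exact h.mul hG.isHomogeneous.rename_isHomogeneous
  have dehomogenize_eq :
      dehomogenize ℚ n (crossProd (X 0) (X ∘ Fin.succ) a b * rename Fin.succ G) =
        C ((-1) ^ (n * b)) * ((∏ l, (1 - X l) ^ (a + b)) * G) := by
    rw [map_mul, map_crossProd, dehomogenize_comp_X_comp_succ, dehomogenize_rename_succ,
      dehomogenize_X_zero, crossProd_eq, Fintype.card_fin, mul_assoc, map_pow, C_neg, C_1]
  have h := coeff_cons_eq_coeff_dehomogenize isHomogeneous (i := n * a)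
    (d := Finsupp.equivFunOnFinite.symm fun l => δ l + b) ?_
  · rw [dehomogenize_eq, coeff_C_mul, ← eval_coeffPoly_eq_coeff, eval_coeffPoly hG,
      Fintype.card_fin, ← mul_assoc, ← mul_assoc, ← mul_pow, neg_one_mul, neg_neg, one_pow,
      one_mul] at h
    exact h
  · simp only [Finsupp.equivFunOnFinite_symm_apply_apply, sum_add_distrib, sum_const, card_univ,
      Fintype.card_fin, smul_eq_mul]
    ring

end Coefficients

section Discriminant

variable {R ι σ : Type*} [CommRing R] {g : ι → σ} {T : Finset ι} {U : Finset σ}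

lemma prod_mem_ideal_pow {I : Ideal R} {s t : Finset ι} (hst : t ⊆ s) {f : ι → R} {k : ℕ}
    (hf : ∀ i ∈ t, f i ∈ I ^ k) : ∏ i ∈ s, f i ∈ I ^ (#t * k) := by
  classical
  rw [← prod_sdiff hst, mul_comm #t, pow_mul, ← prod_const]
  exact Ideal.mul_mem_left _ _ (Ideal.prod_mem_prod hf)

lemma crossProd_mem_diagIdeal_pow [Fintype ι] {j : σ} (hj : j ∈ U) (hT : ∀ l ∈ T, g l ∈ U)
    (a b : ℕ) :
    crossProd (X j) (X ∘ g) a b ∈ diagIdeal R U ^ (#T * (a + b)) := by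
  refine prod_mem_ideal_pow (subset_univ T) fun l hl => ?_
  rw [pow_add]
  exact Ideal.mul_mem_mul (Ideal.pow_mem_pow (X_sub_X_mem_diagIdeal hj (hT l hl)) a)
    (Ideal.pow_mem_pow (X_sub_X_mem_diagIdeal (hT l hl) hj) b)

variable [Fintype ι] [DecidableEq ι]

/-- The product `∏ (Y j - Y i) ^ k` over all ordered pairs `i ≠ j`. -/
def discrProd (Y : ι → R) (k : ℕ) : R :=
  ∏ j, ∏ i ∈ univ.erase j, (Y j - Y i) ^ k

lemma discrProd_mul (Y : ι → R) (k l : ℕ) :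
    discrProd Y k * discrProd Y l = discrProd Y (k + l) := by
  simp only [discrProd, pow_add, prod_mul_distrib]

lemma map_discrProd {S F : Type*} [CommRing S] [FunLike F R S] [RingHomClass F R S]
    (φ : F) (Y : ι → R) (k : ℕ) : φ (discrProd Y k) = discrProd (φ ∘ Y) k := by
  simp only [discrProd, map_prod, map_pow, map_sub, Function.comp_apply]

lemma discrProd_fin_succ {m : ℕ} (Y : Fin (m + 1) → R) (k : ℕ) :
    discrProd Y k = crossProd (Y 0) (Y ∘ Fin.succ) k k * discrProd (Y ∘ Fin.succ) k := by
  have erase_zero : univ.erase (0 : Fin (m + 1)) = univ.map (Fin.succEmb m) := by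
    ext l
    refine Fin.cases ?_ (fun i => ?_) l <;> simp
  have erase_succ (j : Fin m) : univ.erase j.succ =
      insert 0 ((univ.erase j).map (Fin.succEmb m)) := by
    ext l
    refine Fin.cases ?_ (fun i => ?_) l
    · simp [(Fin.succ_ne_zero j).symm]
    · simp [Fin.succ_ne_zero]
  have prod_erase_succ (j : Fin m) : ∏ i ∈ univ.erase j.succ, (Y j.succ - Y i) ^ k =
      (Y j.succ - Y 0) ^ k * ∏ i ∈ univ.erase j, (Y j.succ - Y i.succ) ^ k := by
    rw [erase_succ, prod_insert (by simp [Fin.succ_ne_zero]), prod_map]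
    rfl
  rw [discrProd, Fin.prod_univ_succ, erase_zero, prod_map,
    prod_congr rfl fun j _ => prod_erase_succ j, prod_mul_distrib, ← mul_assoc, ← prod_mul_distrib]
  rfl

lemma prod_filter_one_le_eq_discrProd {m : ℕ} (Y : Fin (m + 1) → R) :
    ∏ j ∈ univ.filter (fun l : Fin (m + 1) => 1 ≤ (l : ℕ)),
        ∏ i ∈ (univ.filter (fun l : Fin (m + 1) => 1 ≤ (l : ℕ))).erase j, (Y j - Y i) =
      discrProd (Y ∘ Fin.succ) 1 := by
  have filter_one_le : univ.filter (fun l : Fin (m + 1) => 1 ≤ (l : ℕ)) =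
      univ.map (Fin.succEmb m) := by
    ext l
    refine Fin.cases ?_ (fun i => ?_) l <;> simp
  rw [filter_one_le, prod_map]
  refine prod_congr rfl fun j _ => ?_
  rw [← map_erase, prod_map]
  simp only [pow_one, Function.comp_apply, Fin.coe_succEmb]

lemma isHomogeneous_discrProd (g : ι → σ) (k : ℕ) :
    (discrProd (X ∘ g) k : MvPolynomial σ R).IsHomogeneous
      (Fintype.card ι * ((Fintype.card ι - 1) * k)) := by
  rw [← card_univ, ← smul_eq_mul, ← sum_const]
  refine IsHomogeneous.prod _ _ _ fun j _ => ?_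
  rw [← card_erase_of_mem (mem_univ j), ← smul_eq_mul, ← sum_const]
  refine IsHomogeneous.prod _ _ _ fun i _ => ?_
  simpa using ((isHomogeneous_X R (g j)).sub (isHomogeneous_X R (g i))).pow k

lemma discrProd_mem_diagIdeal_pow (hT : ∀ l ∈ T, g l ∈ U) (k : ℕ) :
    discrProd (X ∘ g) k ∈ diagIdeal R U ^ (#T * ((#T - 1) * k)) := by
  refine prod_mem_ideal_pow (subset_univ T) fun j hj => ?_
  rw [← card_erase_of_mem hj]
  refine prod_mem_ideal_pow (erase_subset_erase j (subset_univ T)) fun i hi => ?_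
  exact Ideal.pow_mem_pow (X_sub_X_mem_diagIdeal (hT j hj) (hT i (mem_of_mem_erase hi))) k

end Discriminant

section MorrisPolynomial

/-- The polynomial `H(x_0, …, x_m; a, b, k)`, with its denominators cleared. -/
noncomputable def morrisPoly (m a b k : ℕ) : MvPolynomial (Fin (m + 1)) ℚ :=
  crossProd (X 0) (X ∘ Fin.succ) a b * discrProd (X ∘ Fin.succ) k

/-- The exponent at which `morrisPoly m a b k` has the constant term of `H` as its coefficient. -/
def morrisExp (m a b k : ℕ) : Fin (m + 1) → ℕ :=
  Fin.cons (m * a) fun _ => b + (m - 1) * k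

/-- The constant term of `H(x_0, …, x_m; a, b, k)`. -/
noncomputable def morrisCT (m a b k : ℕ) : ℚ :=
  coeff (Finsupp.equivFunOnFinite.symm (morrisExp m a b k)) (morrisPoly m a b k)

lemma morrisExp_self (m k : ℕ) (l : Fin (m + 1)) : morrisExp m k k k l = m * k := by
  refine Fin.cases rfl (fun i => ?_) l
  rw [morrisExp, Fin.cons_succ, ← one_add_mul, Nat.add_sub_cancel' (Nat.one_le_of_lt i.isLt)]

lemma morrisExp_succ_right (m k : ℕ) (l : Fin (m + 1)) :
    morrisExp m k k (k + 1) l = m * k + if 1 ≤ (l : ℕ) then m - 1 else 0 := by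
  refine Fin.cases rfl (fun i => ?_) l
  rw [morrisExp, Fin.cons_succ, if_pos (by simp), mul_add_one, ← add_assoc, ← one_add_mul,
    Nat.add_sub_cancel' (Nat.one_le_of_lt i.isLt)]

/-- The vanishing profile `0, p, p + k, p + 2k, …` of `morrisPoly m p p k`. -/
def morrisShift (p k : ℕ) : ℕ → ℕ
  | 0 => 0
  | i + 1 => p + i * k

variable {m p k : ℕ}

lemma morrisShift_self (k i : ℕ) : morrisShift k k i = k * i := by
  cases i with
  | zero => rfl
  | succ i => rw [morrisShift, mul_add_one, add_comm, mul_comm]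

lemma monotone_morrisShift (p k : ℕ) : Monotone (morrisShift p k) := by
  refine monotone_nat_of_le_succ fun i => ?_
  cases i with
  | zero => exact Nat.zero_le _
  | succ i => exact Nat.add_le_add_left (Nat.mul_le_mul_right k i.le_succ) p

/-- The number of linear factors of `morrisPoly m a b k` that vanish on the diagonal of `U`. -/
def morrisOrder (a b k : ℕ) (U : Finset (Fin (m + 1))) : ℕ :=
  (if 0 ∈ U then #{l : Fin m | l.succ ∈ U} * (a + b) else 0) +
    #{l : Fin m | l.succ ∈ U} * ((#{l : Fin m | l.succ ∈ U} - 1) * k)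

lemma morrisPoly_mem_diagIdeal_pow (a b k : ℕ) (U : Finset (Fin (m + 1))) :
    morrisPoly m a b k ∈ diagIdeal ℚ U ^ morrisOrder a b k U := by
  have succ_mem (l : Fin m) (hl : l ∈ ({l | l.succ ∈ U} : Finset (Fin m))) : l.succ ∈ U :=
    (mem_filter.1 hl).2
  rw [morrisOrder, pow_add]
  refine Ideal.mul_mem_mul ?_ (discrProd_mem_diagIdeal_pow succ_mem k)
  split_ifs with h
  · exact crossProd_mem_diagIdeal_pow h succ_mem a b
  · rw [pow_zero, Ideal.one_eq_top]
    exact Submodule.mem_top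

lemma card_eq_card_succ_mem (U : Finset (Fin (m + 1))) :
    #U = (if 0 ∈ U then 1 else 0) + #{l : Fin m | l.succ ∈ U} := by
  rw [← Fin.card_filter_univ_succ', filter_univ_mem]

lemma sum_morrisExp (m a b k : ℕ) (U : Finset (Fin (m + 1))) :
    ∑ l ∈ U, morrisExp m a b k l =
      (if 0 ∈ U then m * a else 0) + #{l : Fin m | l.succ ∈ U} * (b + (m - 1) * k) := by
  conv_lhs => rw [← filter_univ_mem U, sum_filter, Fin.sum_univ_succ]
  simp only [morrisExp, Fin.cons_zero, Fin.cons_succ]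
  rw [← sum_filter, sum_const, smul_eq_mul]

lemma isHomogeneous_morrisPoly (m a b k : ℕ) :
    (morrisPoly m a b k).IsHomogeneous (∑ l, morrisExp m a b k l) := by
  have h := (isHomogeneous_crossProd (R := ℚ) 0 (Fin.succ (n := m)) a b).mul
    (isHomogeneous_discrProd (R := ℚ) (Fin.succ (n := m)) k)
  rw [Fintype.card_fin] at h
  refine (congrArg _ ?_).mp h
  rw [sum_morrisExp, if_pos (mem_univ 0)]
  simp only [mem_univ, filter_true, card_univ, Fintype.card_fin]
  ring

lemma morrisPoly_mem_diagIdeal_pow_of_lt (hpk : p ≤ k) (hkp : k ≤ p + 1)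
    {U : Finset (Fin (m + 1))} {s : ℕ} (hs : s < morrisShift p k (#U - 1)) :
    morrisPoly m p p k ∈ diagIdeal ℚ U ^ (#U * s + 1) := by
  refine Ideal.pow_le_pow_right ?_ (morrisPoly_mem_diagIdeal_pow p p k U)
  rw [card_eq_card_succ_mem U] at hs ⊢
  rw [morrisOrder]
  generalize #{l : Fin m | l.succ ∈ U} = c at hs ⊢
  split_ifs at hs ⊢
  · rw [Nat.add_sub_cancel_left] at hs
    rcases c with _ | c
    · exact absurd hs (Nat.not_lt_zero s)
    · have hs' : s + 1 ≤ p + c * k := hs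
      rw [Nat.add_sub_cancel]
      nlinarith [Nat.mul_le_mul_left (c + 2) hs', Nat.mul_le_mul_left c hkp]
  · rw [zero_add] at hs
    rcases c with _ | _ | c
    · exact absurd hs (Nat.not_lt_zero s)
    · exact absurd hs (Nat.not_lt_zero s)
    · have hs' : s + 1 ≤ p + c * k := hs
      rw [Nat.add_sub_cancel]
      nlinarith [Nat.mul_le_mul_left (c + 2) hs', Nat.mul_le_mul_left (c + 2) hpk]

lemma sum_morrisExp_lt (hpk : p ≤ k) (hkp : k ≤ p + 1) {U : Finset (Fin (m + 1))}
    (hU : Uᶜ.Nonempty) :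
    ∑ l ∈ U, morrisExp m p p k l < morrisOrder p p k U + #Uᶜ * (morrisShift p k #U + 1) := by
  have card_add := card_add_card_compl U
  have card_compl_pos := hU.card_pos
  rw [Fintype.card_fin, card_eq_card_succ_mem U] at card_add
  rw [sum_morrisExp, morrisOrder, card_eq_card_succ_mem U]
  generalize #{l : Fin m | l.succ ∈ U} = c at card_add ⊢
  generalize #Uᶜ = v at card_add card_compl_pos ⊢
  split_ifs at card_add ⊢
  · obtain rfl : m = c + v := by omega
    rcases c with _ | c
    · simp only [zero_mul, zero_add, add_zero, morrisShift]
      nlinarith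
    · have pred_eq : c + 1 + v - 1 = c + v := by omega
      rw [add_comm 1 (c + 1), morrisShift, pred_eq, Nat.add_sub_cancel]
      nlinarith
  · rcases c with _ | c
    · simp only [zero_mul, zero_add, add_zero, morrisShift, mul_one]
      exact card_compl_pos
    · obtain ⟨w, hw⟩ : ∃ w, c + v = w + 1 := ⟨c + v - 1, by omega⟩
      obtain rfl : m = w + 1 := by omega
      rw [zero_add (c + 1), morrisShift, Nat.add_sub_cancel, Nat.add_sub_cancel]
      have mul_eq : (c + 1) * (c + v) * k = (c + 1) * (w + 1) * k := by rw [hw]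
      obtain rfl | rfl : k = p ∨ k = p + 1 := by omega
      · nlinarith
      · nlinarith

lemma exists_le_morrisExp_add (hpk : p ≤ k) (hkp : k ≤ p + 1) {V : Finset (Fin (m + 1))}
    (hV : V.Nonempty) {e : Fin (m + 1) →₀ ℕ} (he : e ∈ (morrisPoly m p p k).support) :
    ∃ l ∈ V, e l ≤ morrisExp m p p k l + morrisShift p k #Vᶜ := by
  by_contra! h
  have sum_V : ∑ l ∈ V, (morrisExp m p p k l + (morrisShift p k #Vᶜ + 1)) ≤ ∑ l ∈ V, e l :=
    sum_le_sum h
  rw [sum_add_distrib, sum_const, smul_eq_mul] at sum_V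
  have sum_compl := le_sum_of_mem_diagIdeal_pow (morrisPoly_mem_diagIdeal_pow p p k Vᶜ) he
  have sum_eq := sum_eq_of_mem_support (isHomogeneous_morrisPoly m p p k) he
  rw [← sum_add_sum_compl V, ← sum_add_sum_compl V (morrisExp m p p k)] at sum_eq
  have sum_lt := sum_morrisExp_lt (m := m) hpk hkp (U := Vᶜ) (by rwa [compl_compl])
  rw [compl_compl] at sum_lt
  omega

theorem hasVanishingProfile_morrisPoly (m : ℕ) (hpk : p ≤ k) (hkp : k ≤ p + 1) :
    HasVanishingProfile (morrisPoly m p p k) (morrisExp m p p k) (morrisShift p k) where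
  isHomogeneous := isHomogeneous_morrisPoly m p p k
  monotone := monotone_morrisShift p k
  mem_diagIdeal_pow _ hs := morrisPoly_mem_diagIdeal_pow_of_lt hpk hkp hs
  exists_le hV he := exists_le_morrisExp_add hpk hkp hV he

end MorrisPolynomial

section ConstantTerms

lemma rename_succ_morrisPoly (m a b k : ℕ) : rename Fin.succ (morrisPoly m a b k) =
    crossProd (X (Fin.succ 0)) (X ∘ Fin.succ ∘ Fin.succ) a b *
      discrProd (X ∘ Fin.succ ∘ Fin.succ) k := by
  have comp : (rename Fin.succ : MvPolynomial (Fin (m + 1)) ℚ → _) ∘ X ∘ Fin.succ =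
      X ∘ Fin.succ ∘ Fin.succ := funext fun l => rename_X _ _
  rw [morrisPoly, map_mul, map_crossProd, map_discrProd, rename_X, comp]

lemma rename_succ_morrisPoly_self (m k : ℕ) : rename Fin.succ (morrisPoly m k k k) =
    discrProd (X ∘ Fin.succ) k := by
  rw [rename_succ_morrisPoly, discrProd_fin_succ]
  rfl

lemma rename_succ_morrisPoly_succ_right (m k : ℕ) : rename Fin.succ (morrisPoly m k k (k + 1)) =
    discrProd ((X ∘ Fin.succ) ∘ Fin.succ) 1 * discrProd (X ∘ Fin.succ) k := by
  rw [rename_succ_morrisPoly, discrProd_fin_succ (X ∘ Fin.succ), mul_left_comm, discrProd_mul,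
    add_comm 1 k]
  rfl

lemma morrisCT_succ (m a b k : ℕ) : morrisCT (m + 1) a b k =
    morrisCT m k k k * ∏ i ∈ range (m + 1), ((a + b + k * i).factorial * (k * i).factorial /
      ((a + k * i).factorial * (b + k * i).factorial) : ℚ) := by
  have h := coeff_crossProd_mul_rename (hasVanishingProfile_morrisPoly m le_rfl k.le_succ) a b
  simp only [morrisShift_self, morrisExp_self, rename_succ_morrisPoly_self] at h
  rw [morrisCT, morrisExp, morrisPoly, Nat.add_sub_cancel, add_comm b]
  exact h

lemma forresterCT_eq_coeff {n₀ n₁ N : ℕ} (hN : n₀ + n₁ = N) (a b k : ℕ) :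
    forresterCT n₀ n₁ a b k =
      coeff (Finsupp.equivFunOnFinite.symm (Fin.cons (N * a) fun l : Fin N =>
          b + (N - 1) * k + if n₀ ≤ (l : ℕ) then n₁ - 1 else 0))
        ((∏ j ∈ univ.filter (fun l : Fin N => n₀ ≤ (l : ℕ)),
            ∏ i ∈ (univ.filter (fun l : Fin N => n₀ ≤ (l : ℕ))).erase j,
              ((X ∘ Fin.succ) j - (X ∘ Fin.succ) i)) *
          crossProd (X 0) (X ∘ Fin.succ) a b * discrProd (X ∘ Fin.succ) k) := by
  subst hN
  rfl

lemma forresterCT_one_left (m a b k : ℕ) : forresterCT 1 m a b k =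
    morrisCT m k k (k + 1) * ∏ i ∈ range (m + 1),
      ((a + b + morrisShift k (k + 1) i).factorial * (morrisShift k (k + 1) i).factorial /
        ((a + morrisShift k (k + 1) i).factorial *
          (b + morrisShift k (k + 1) i).factorial) : ℚ) := by
  have exponent_eq : (fun l : Fin (m + 1) =>
      b + (m + 1 - 1) * k + if 1 ≤ (l : ℕ) then m - 1 else 0) =
      fun l => morrisExp m k k (k + 1) l + b := by
    funext l
    rw [morrisExp_succ_right, Nat.add_sub_cancel, add_assoc, add_comm b]
  rw [forresterCT_eq_coeff (add_comm 1 m), prod_filter_one_le_eq_discrProd, exponent_eq,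
    mul_comm (discrProd _ 1), mul_assoc, ← rename_succ_morrisPoly_succ_right]
  exact coeff_crossProd_mul_rename (hasVanishingProfile_morrisPoly m k.le_succ le_rfl) a b

theorem morrisCT_eq_prod (m a b k : ℕ) : morrisCT m a b k =
    ∏ l ∈ range m, ((a + b + k * l).factorial * (k * (l + 1)).factorial /
      ((a + k * l).factorial * (b + k * l).factorial * k.factorial) : ℚ) := by
  induction m generalizing a b with
  | zero =>
    have exponent_eq : Finsupp.equivFunOnFinite.symm (morrisExp 0 a b k) = 0 := by
      ext i
      simp [Fin.fin_one_eq_zero i, morrisExp]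
    rw [morrisCT, exponent_eq, morrisPoly, crossProd, discrProd, univ_eq_empty]
    simp
  | succ m ih =>
    rw [morrisCT_succ, ih, prod_range_succ', prod_range_succ', ← mul_assoc, ← prod_mul_distrib]
    congr 1
    · refine prod_congr rfl fun i _ => ?_
      rw [show k + k + k * i = k * (i + 1 + 1) by ring, show k + k * i = k * (i + 1) by ring]
      field_simp
    · simp only [mul_zero, zero_add, mul_one, Nat.factorial_zero, Nat.cast_one]
      field_simp

lemma forrester_factor (a b k j : ℕ) :
    ((k + k + (k + 1) * j).factorial * ((k + 1) * (j + 1)).factorial /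
        ((k + (k + 1) * j).factorial * (k + (k + 1) * j).factorial * (k + 1).factorial) : ℚ) *
      ((a + b + (k + j * (k + 1))).factorial * (k + j * (k + 1)).factorial /
        ((a + (k + j * (k + 1))).factorial * (b + (k + j * (k + 1))).factorial)) =
    ((j + 1) * ((k + 1) * j + a + b + k * 1).factorial * (k * j + k + j + k * 1).factorial) /
      (k.factorial * ((k + 1) * j + a + k * 1).factorial *
        ((k + 1) * j + b + k * 1).factorial) := by
  rw [show k * j + k + j + k * 1 = k + k + (k + 1) * j by ring,
    show (k + 1) * j + a + b + k * 1 = a + b + (k + j * (k + 1)) by ring,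
    show (k + 1) * j + a + k * 1 = a + (k + j * (k + 1)) by ring,
    show (k + 1) * j + b + k * 1 = b + (k + j * (k + 1)) by ring,
    show (k + 1) * (j + 1) = k + (k + 1) * j + 1 by ring,
    show k + j * (k + 1) = k + (k + 1) * j by ring,
    Nat.factorial_succ, Nat.factorial_succ k]
  push_cast
  field_simp
  ring

end ConstantTerms

/-- **Forrester's conjecture in the case `n₀ = 1`, `n₁ = n - 1`** (Corollary 5.3,
second case): for `n ≥ 1`,
`CT_x ∏_{2 ≤ i ≠ j ≤ n}(1-x_i/x_j) H(x_0,…,x_n;a,b,k)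
  = M_1(a,b,k) ∏_{j=0}^{n-2} (j+1)((k+1)j+a+b+k)!(kj+k+j+k)! /
      (k!((k+1)j+a+k)!((k+1)j+b+k)!)`. -/
theorem forrester_n1_eq_n_sub_one (n a b k : ℕ) (hn : 1 ≤ n) :
    forresterCT 1 (n - 1) a b k = forresterRHS 1 (n - 1) a b k := by
  generalize n - 1 = m
  rw [forresterCT_one_left, morrisCT_eq_prod, forresterRHS, prod_range_succ', ← mul_assoc,
    ← prod_mul_distrib, mul_comm]
  congr 1
  · simp only [morrisShift, prod_range_one, mul_zero, add_zero, zero_add, mul_one,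
      Nat.factorial_zero, Nat.cast_one]
    field_simp
  · exact prod_congr rfl fun j _ => forrester_factor a b k j
end
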